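/- arXiv:math/9912177 — 2 statements merged into one kernel-verified Lean document; each statement's English description precedes it below -/
import Mathlib

section
/- Let B = B(0,1) be the open unit ball in Euclidean ℝ³ and fix ε ∈ (0, 1/2). Let u be C² on a neighborhood of the closed unit ball with u ≥ 0 on B, and set f = Δu. Then there is a constant C = C(ε), independent of u, such that ∫_B u ≤ C·( ∫_B |f| + ∫_{B(0,ε)} u + u_av(ε) ), where u_av(ε) denotes the mean value of u over the sphere of radius ε about 0, taken with respect to two-dimensional surface (Hausdorff) measure. -/
open MeasureTheory Metric

/-- The Euclidean Laplacian of `u : ℝ³ → ℝ`, as the sum of the pure second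
partial derivatives in the coordinate directions. -/
noncomputable def lap (u : EuclideanSpace ℝ (Fin 3) → ℝ)
    (x : EuclideanSpace ℝ (Fin 3)) : ℝ :=
  ∑ i : Fin 3,
    fderiv ℝ (fun y => fderiv ℝ u y (EuclideanSpace.single i (1 : ℝ))) x
      (EuclideanSpace.single i (1 : ℝ))


lemma unif_meas {E : Type*} [MetricSpace E] [MeasurableSpace E] [BorelSpace E] [SecondCountableTopology E]
    (K : Set E) (hK : IsCompact K) (μ ν : Measure E) [IsFiniteMeasure μ] [IsFiniteMeasure ν]
    (hμ : μ Kᶜ = 0) (hν : ν Kᶜ = 0) (g h : ℝ → ENNReal)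
    (hg : ∀ x ∈ K, ∀ r, μ (ball x r) = g r) (hh : ∀ x ∈ K, ∀ r, ν (ball x r) = h r)
    (φ : E → ℝ) (hφ : Continuous φ) :
    (∫ x, φ x ∂μ) * ν.real Set.univ = (∫ x, φ x ∂ν) * μ.real Set.univ := by
  have aeμ : ∀ᵐ x ∂μ, x ∈ K := by rw [ae_iff]; exact hμ
  have aeν : ∀ᵐ x ∂ν, x ∈ K := by rw [ae_iff]; exact hν
  by_cases hν0 : ν = 0
  · simp [hν0]
  obtain ⟨B, hB⟩ := hK.exists_bound_of_continuousOn hφ.continuousOn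
  have key : ∀ δ > 0, |(∫ x, φ x ∂μ) * ν.real Set.univ - (∫ x, φ x ∂ν) * μ.real Set.univ|
      ≤ δ * (μ.real Set.univ * ν.real Set.univ) := by
    intro δ hδ
    have huc := hK.uniformContinuousOn_of_continuous hφ.continuousOn
    rw [Metric.uniformContinuousOn_iff] at huc
    obtain ⟨r, hr, hur⟩ := huc δ hδ
    -- positivity
    have hpos : h r ≠ 0 := by
      intro h0
      obtain ⟨t, htK, htf, hcov⟩ := hK.finite_cover_balls hr
      have : ν K = 0 := by
        refine measure_mono_null hcov ?_
        rw [measure_biUnion_null_iff htf.countable]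
        intro x hx
        rw [hh x (htK hx), h0]
      apply hν0
      rw [← Measure.measure_univ_eq_zero, ← Set.union_compl_self K]
      exact measure_union_null this hν
    have hne : K.Nonempty := by
      by_contra hne
      rw [Set.not_nonempty_iff_eq_empty] at hne
      apply hν0
      rw [← Measure.measure_univ_eq_zero, ← Set.compl_empty, ← hne]
      exact hν
    obtain ⟨x0, hx0⟩ := hne
    have hfin : h r ≠ ⊤ := by rw [← hh x0 hx0 r]; exact measure_ne_top _ _
    set H := (h r).toReal with hH
    set G := (g r).toReal with hG
    have Hpos : 0 < H := ENNReal.toReal_pos hpos hfin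
    let S : Set (E × E) := {p | dist p.1 p.2 < r}
    have hS : MeasurableSet S := (isOpen_lt (by fun_prop) continuous_const).measurableSet
    have slice1 : ∀ x, ∀ y, S.indicator (fun _ => (1:ℝ)) (x, y) = (ball x r).indicator (fun _ => 1) y := by
      intro x y
      simp [S, Set.indicator, dist_comm]
    have slice2 : ∀ x, ∀ y, S.indicator (fun _ => (1:ℝ)) (x, y) = (ball y r).indicator (fun _ => 1) x := by
      intro x y
      simp [S, Set.indicator]
    have aeprod : ∀ᵐ p ∂(μ.prod ν), p.1 ∈ K ∧ p.2 ∈ K := by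
      have h1 := Measure.quasiMeasurePreserving_fst (μ := μ) (ν := ν) |>.ae aeμ
      have h2 := Measure.quasiMeasurePreserving_snd (μ := μ) (ν := ν) |>.ae aeν
      filter_upwards [h1, h2] with p a b using ⟨a, b⟩
    have int0 : Integrable (fun p : E × E => S.indicator (fun _ => (1:ℝ)) p) (μ.prod ν) :=
      (integrable_const (1:ℝ)).indicator hS
    have int1 : Integrable (fun p : E × E => S.indicator (fun _ => (1:ℝ)) p * φ p.1) (μ.prod ν) := by
      refine int0.mul_bdd (c := B) (hφ.comp continuous_fst).aestronglyMeasurable ?_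
      filter_upwards [aeprod] with p hp using hB _ hp.1
    have int2 : Integrable (fun p : E × E => S.indicator (fun _ => (1:ℝ)) p * φ p.2) (μ.prod ν) := by
      refine int0.mul_bdd (c := B) (hφ.comp continuous_snd).aestronglyMeasurable ?_
      filter_upwards [aeprod] with p hp using hB _ hp.2
    have e1 : ∫ p, S.indicator (fun _ => (1:ℝ)) p * φ p.1 ∂(μ.prod ν) = H * ∫ x, φ x ∂μ := by
      rw [integral_prod _ int1, ← integral_const_mul]
      apply integral_congr_ae
      filter_upwards [aeμ] with x hx
      simp only [slice1]
      rw [integral_mul_const, integral_indicator measurableSet_ball]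
      simp [Measure.real, hh x hx, hH]
    have e2 : ∫ p, S.indicator (fun _ => (1:ℝ)) p * φ p.2 ∂(μ.prod ν) = G * ∫ x, φ x ∂ν := by
      rw [integral_prod_symm _ int2, ← integral_const_mul]
      apply integral_congr_ae
      filter_upwards [aeν] with x hx
      simp only [slice2]
      rw [integral_mul_const, integral_indicator measurableSet_ball]
      simp [Measure.real, hg x hx, hG]
    have e3 : ∫ p, S.indicator (fun _ => (1:ℝ)) p ∂(μ.prod ν) = H * μ.real Set.univ := by
      rw [integral_prod _ int0]
      trans ∫ x, H ∂μ
      · apply integral_congr_ae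
        filter_upwards [aeμ] with x hx
        simp only [slice1]
        rw [integral_indicator measurableSet_ball]
        simp [Measure.real, hh x hx, hH]
      · simp [mul_comm]
    have e4 : ∫ p, S.indicator (fun _ => (1:ℝ)) p ∂(μ.prod ν) = G * ν.real Set.univ := by
      rw [integral_prod_symm _ int0]
      trans ∫ x, G ∂ν
      · apply integral_congr_ae
        filter_upwards [aeν] with x hx
        simp only [slice2]
        rw [integral_indicator measurableSet_ball]
        simp [Measure.real, hg x hx, hG]
      · simp [mul_comm]
    have e5 : |H * (∫ x, φ x ∂μ) - G * ∫ x, φ x ∂ν| ≤ δ * (H * μ.real Set.univ) := by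
      rw [← e1, ← e2, ← e3, ← integral_sub int1 int2, ← integral_const_mul]
      refine (abs_integral_le_integral_abs).trans ?_
      apply integral_mono_ae (int1.sub int2).abs (int0.const_mul _)
      filter_upwards [aeprod] with p hp
      by_cases hpS : p ∈ S
      · simp only [Set.indicator_of_mem hpS]
        have := hur p.1 hp.1 p.2 hp.2 hpS
        rw [Real.dist_eq] at this
        simpa [Set.indicator_of_mem hpS] using this.le
      · simp [Set.indicator_of_notMem hpS]
    have e6 : G * ν.real Set.univ = H * μ.real Set.univ := by rw [← e4, e3]
    have hn : 0 ≤ ν.real Set.univ := measureReal_nonneg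
    have e7 : H * |(∫ x, φ x ∂μ) * ν.real Set.univ - (∫ x, φ x ∂ν) * μ.real Set.univ| =
       |H * (∫ x, φ x ∂μ) - G * ∫ x, φ x ∂ν| * ν.real Set.univ := by
      have aa : ∀ X : ℝ, H * |X| = |H * X| := fun X => by rw [abs_mul, abs_of_pos Hpos]
      have bb : ∀ X : ℝ, |X| * ν.real Set.univ = |X * ν.real Set.univ| := fun X => by
        rw [abs_mul, abs_of_nonneg hn]
      rw [aa, bb]
      congr 1
      linear_combination (∫ x, φ x ∂ν) * e6
    refine le_of_mul_le_mul_left ?_ Hpos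
    rw [e7]
    calc _ ≤ δ * (H * μ.real Set.univ) * ν.real Set.univ := by gcongr
      _ = _ := by ring
  rw [← sub_eq_zero, ← abs_eq_zero]
  refine le_antisymm ?_ (abs_nonneg _)
  refine le_of_forall_pos_le_add fun η hη => ?_
  set P := μ.real Set.univ * ν.real Set.univ
  have hP : 0 ≤ P := by positivity
  refine (key (η / (P + 1)) (by positivity)).trans ?_
  rw [div_mul_eq_mul_div, div_le_iff₀ (by positivity)]
  nlinarith

lemma exists_isom (x y : (EuclideanSpace ℝ (Fin 3))) (h : ‖x‖ = ‖y‖) : ∃ L : (EuclideanSpace ℝ (Fin 3)) ≃ₗᵢ[ℝ] (EuclideanSpace ℝ (Fin 3)), L x = y :=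
  ⟨_, Submodule.reflection_sub h⟩

/-- pushforward of the sphere measure -/
noncomputable def sig (ε : ℝ) : Measure (EuclideanSpace ℝ (Fin 3)) :=
  Measure.map (fun w : sphere (0 : (EuclideanSpace ℝ (Fin 3))) 1 => ε • (w : (EuclideanSpace ℝ (Fin 3)))) (volume : Measure (EuclideanSpace ℝ (Fin 3))).toSphere

open scoped Pointwise in
lemma sig_ball (ε : ℝ) (x y : (EuclideanSpace ℝ (Fin 3))) (h : ‖x‖ = ‖y‖) (r : ℝ) :
    sig ε (ball x r) = sig ε (ball y r) := by
  obtain ⟨L, hL⟩ := exists_isom x y h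
  have hc : Measurable (fun w : sphere (0 : (EuclideanSpace ℝ (Fin 3))) 1 => ε • (w : (EuclideanSpace ℝ (Fin 3)))) :=
    Continuous.measurable (by fun_prop)
  rw [sig, Measure.map_apply hc measurableSet_ball, Measure.map_apply hc measurableSet_ball,
    Measure.toSphere_apply' _ (hc measurableSet_ball), Measure.toSphere_apply' _ (hc measurableSet_ball)]
  congr 1
  have : Set.Ioo (0:ℝ) 1 • ((↑) '' ((fun w : sphere (0 : (EuclideanSpace ℝ (Fin 3))) 1 => ε • (w : (EuclideanSpace ℝ (Fin 3)))) ⁻¹' ball x r) : Set (EuclideanSpace ℝ (Fin 3)))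
     = L ⁻¹' (Set.Ioo (0:ℝ) 1 • ((↑) '' ((fun w : sphere (0 : (EuclideanSpace ℝ (Fin 3))) 1 => ε • (w : (EuclideanSpace ℝ (Fin 3)))) ⁻¹' ball y r) : Set (EuclideanSpace ℝ (Fin 3)))) := by
    ext z
    simp only [Set.mem_smul, Set.mem_image, Set.mem_preimage, Subtype.exists, mem_ball, exists_and_right,
      exists_eq_right, mem_sphere_zero_iff_norm]
    constructor
    · rintro ⟨t, ht, w, ⟨hw, hd⟩, rfl⟩
      refine ⟨t, ht, L w, ⟨by simpa using hw, ?_⟩, by simp⟩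
      rw [← hL, ← L.map_smul, L.dist_map]; exact hd
    · rintro ⟨t, ht, w, ⟨hw, hd⟩, hz⟩
      refine ⟨t, ht, L.symm w, ⟨by simpa using hw, ?_⟩, ?_⟩
      · rw [← L.dist_map, L.map_smul, hL]; simpa using hd
      · apply L.injective; simp [hz]
  rw [this]
  exact (L.measurePreserving.measure_preimage_equiv (f := L.toHomeomorph.toMeasurableEquiv) _)

lemma haus_ball (ε : ℝ) (x y : (EuclideanSpace ℝ (Fin 3))) (h : ‖x‖ = ‖y‖) (r : ℝ) :
    (μH[2] : Measure (EuclideanSpace ℝ (Fin 3))).restrict (sphere 0 ε) (ball x r) = (μH[2] : Measure (EuclideanSpace ℝ (Fin 3))).restrict (sphere 0 ε) (ball y r) := by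
  obtain ⟨L, hL⟩ := exists_isom x y h
  rw [Measure.restrict_apply measurableSet_ball, Measure.restrict_apply measurableSet_ball,
    ← L.isometry.hausdorffMeasure_image (Or.inl zero_le_two)]
  congr 1
  rw [Set.image_inter L.injective]
  have h1 := L.image_ball x r
  have h2 := L.image_sphere 0 ε
  rw [h1, h2, hL]; simp

lemma haus_pos (ε : ℝ) (hε : 0 < ε) : (μH[2] : Measure (EuclideanSpace ℝ (Fin 3))) (sphere 0 ε) ≠ 0 := by
  intro h0
  let P : (EuclideanSpace ℝ (Fin 3)) → (Fin 2 → ℝ) := fun x => ![x 0, x 1]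
  have hP : LipschitzWith 1 P := by
    apply LipschitzWith.mk_one
    intro x y
    rw [dist_pi_le_iff dist_nonneg]
    have key : ∀ i, dist (x i) (y i) ≤ dist x y := fun i => by
      simpa [dist_eq_norm] using PiLp.norm_apply_le (x - y) i
    intro i
    fin_cases i
    · exact key 0
    · exact key 1
  have h1 := hP.hausdorffMeasure_image_le (d := 2) zero_le_two (sphere 0 ε)
  rw [h0, mul_zero] at h1
  have h2 : ball (0 : Fin 2 → ℝ) (ε/2) ⊆ P '' sphere 0 ε := by
    intro z hz
    rw [mem_ball_zero_iff, pi_norm_lt_iff (by positivity)] at hz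
    have a0 := hz 0
    have a1 := hz 1
    rw [Real.norm_eq_abs] at a0 a1
    have b0 := sq_lt_sq' (abs_lt.1 a0).1 (abs_lt.1 a0).2
    have b1 := sq_lt_sq' (abs_lt.1 a1).1 (abs_lt.1 a1).2
    refine ⟨!₂[z 0, z 1, √(ε^2 - z 0 ^2 - z 1 ^2)], ?_, ?_⟩
    · rw [mem_sphere_zero_iff_norm, EuclideanSpace.norm_eq, Fin.sum_univ_three]
      simp only [Real.norm_eq_abs, sq_abs]
      simp
      rw [Real.sq_sqrt (by nlinarith)]
      ring_nf
      exact Real.sqrt_sq hε.le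
    · ext i; fin_cases i <;> simp [P]
  have h3 : (μH[2] : Measure (Fin 2 → ℝ)) (ball 0 (ε/2)) = 0 := le_antisymm ((measure_mono h2).trans h1) bot_le
  have h4 : (μH[2] : Measure (Fin 2 → ℝ)) = volume := by
    have := hausdorffMeasure_pi_real (ι := Fin 2)
    simpa using this
  rw [h4] at h3
  exact (measure_ball_pos volume (0 : Fin 2 → ℝ) (half_pos hε)).ne' h3

lemma haus_fin (ε : ℝ) (hε : 0 < ε) : (μH[2] : Measure (EuclideanSpace ℝ (Fin 3))) (sphere 0 ε) < ⊤ := by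
  let Φ : (Fin 2 → ℝ) → (EuclideanSpace ℝ (Fin 3)) := fun p =>
    WithLp.toLp 2 ![ε * (Real.sin (p 0) * Real.cos (p 1)), ε * (Real.sin (p 0) * Real.sin (p 1)), ε * Real.cos (p 0)]
  have hΦ : ContDiff ℝ 1 Φ := by
    rw [contDiff_euclidean]
    intro i
    fin_cases i <;> simp [Φ] <;> fun_prop
  let Q : Set (Fin 2 → ℝ) := closedBall 0 4
  have hQ : IsCompact Q := isCompact_closedBall _ _
  obtain ⟨K, hK⟩ := (hΦ.locallyLipschitz.locallyLipschitzOn (s := Q)).exists_lipschitzOnWith_of_compact hQ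
  have h1 := hK.hausdorffMeasure_image_le (d := 2) zero_le_two
  have h4 : (μH[2] : Measure (Fin 2 → ℝ)) = volume := by
    have := hausdorffMeasure_pi_real (ι := Fin 2)
    simpa using this
  rw [h4] at h1
  have h2 : sphere 0 ε ⊆ Φ '' Q := by
    intro z hz
    rw [mem_sphere_zero_iff_norm] at hz
    have hz2 : z 0 ^ 2 + z 1 ^ 2 + z 2 ^2 = ε ^ 2 := by
      rw [← hz, EuclideanSpace.norm_sq_eq, Fin.sum_univ_three]; simp
    let c : ℂ := ⟨z 0, z 1⟩
    have hcn : ‖c‖ ^ 2 = z 0 ^2 + z 1 ^2 := by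
      rw [Complex.sq_norm, Complex.normSq_apply]; simp [c]; ring
    let θ := Real.arccos (z 2 / ε)
    have hb : |z 2| ≤ ε := abs_le_of_sq_le_sq (by nlinarith [sq_nonneg (z 0), sq_nonneg (z 1)]) hε.le
    have hcos : ε * Real.cos θ = z 2 := by
      rw [Real.cos_arccos]
      · field_simp
      · rw [le_div_iff₀ hε]; linarith [(abs_le.1 hb).1]
      · rw [div_le_iff₀ hε]; linarith [(abs_le.1 hb).2]
    have hsin0 : 0 ≤ Real.sin θ := Real.sin_nonneg_of_nonneg_of_le_pi (Real.arccos_nonneg _) (Real.arccos_le_pi _)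
    have hsin : ε * Real.sin θ = ‖c‖ := by
      rw [← sq_eq_sq₀ (by positivity) (norm_nonneg _), hcn]
      have := Real.sin_sq_add_cos_sq θ
      rw [← hcos] at hz2
      linear_combination ε^2 * this - hz2
    refine ⟨![θ, c.arg], ?_, ?_⟩
    · have hpi := Real.pi_lt_four
      simp only [Q, mem_closedBall_zero_iff]
      rw [pi_norm_le_iff_of_nonneg (by norm_num)]
      intro i
      fin_cases i
      · simp only [Fin.zero_eta, Matrix.cons_val_zero, Real.norm_eq_abs]
        rw [abs_of_nonneg (Real.arccos_nonneg _)]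
        exact (Real.arccos_le_pi _).trans hpi.le
      · simpa using (Complex.abs_arg_le_pi c).trans hpi.le
    · ext i
      fin_cases i
      · simp [Φ]
        rw [← mul_assoc, hsin, Complex.norm_mul_cos_arg]
      · simp [Φ]
        rw [← mul_assoc, hsin, Complex.norm_mul_sin_arg]
      · simp [Φ]; exact hcos
  refine (measure_mono h2).trans_lt (h1.trans_lt ?_)
  exact ENNReal.mul_lt_top (by simp) hQ.measure_lt_top

lemma polar_pre (f : (EuclideanSpace ℝ (Fin 3)) → ℝ) (hf : Integrable f) :
    Integrable (fun p : sphere (0 : (EuclideanSpace ℝ (Fin 3))) 1 × Set.Ioi (0:ℝ) => f ((p.2 : ℝ) • (p.1 : (EuclideanSpace ℝ (Fin 3)))))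
      ((volume : Measure (EuclideanSpace ℝ (Fin 3))).toSphere.prod (Measure.volumeIoiPow 2)) ∧
    ∫ x, f x = ∫ p : sphere (0 : (EuclideanSpace ℝ (Fin 3))) 1 × Set.Ioi (0:ℝ), f ((p.2 : ℝ) • (p.1 : (EuclideanSpace ℝ (Fin 3))))
      ∂((volume : Measure (EuclideanSpace ℝ (Fin 3))).toSphere.prod (Measure.volumeIoiPow 2)) := by
  have hd : Module.finrank ℝ (EuclideanSpace ℝ (Fin 3)) - 1 = 2 := by simp
  have mp := (volume : Measure (EuclideanSpace ℝ (Fin 3))).measurePreserving_homeomorphUnitSphereProd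
  rw [hd] at mp
  have hemb := (homeomorphUnitSphereProd (EuclideanSpace ℝ (Fin 3))).measurableEmbedding
  have hcomp : (fun p : sphere (0 : (EuclideanSpace ℝ (Fin 3))) 1 × Set.Ioi (0:ℝ) => f ((p.2 : ℝ) • (p.1 : (EuclideanSpace ℝ (Fin 3))))) ∘
      (homeomorphUnitSphereProd (EuclideanSpace ℝ (Fin 3))) = fun x : ({0}ᶜ : Set (EuclideanSpace ℝ (Fin 3))) => f x := by
    funext x
    have hx : ‖(x : (EuclideanSpace ℝ (Fin 3)))‖ ≠ 0 := norm_ne_zero_iff.2 x.2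
    simp [smul_smul, hx]
  constructor
  · rw [← mp.integrable_comp_emb hemb, hcomp]
    have := hf.integrableOn (s := ({0}ᶜ : Set (EuclideanSpace ℝ (Fin 3))))
    rw [integrableOn_iff_comap_subtypeVal (by measurability)] at this
    exact this
  · rw [← mp.integral_comp hemb]
    have : ∀ x, f ((((homeomorphUnitSphereProd (EuclideanSpace ℝ (Fin 3))) x).2 : ℝ) • (((homeomorphUnitSphereProd (EuclideanSpace ℝ (Fin 3))) x).1 : (EuclideanSpace ℝ (Fin 3)))) = f x :=
      fun x => congrFun hcomp x
    simp only [this]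
    rw [integral_subtype_comap (measurableSet_singleton _).compl f, restrict_compl_singleton]

lemma integral_Ioi_pow (g : ℝ → ℝ) :
    ∫ r : Set.Ioi (0:ℝ), g r ∂(Measure.volumeIoiPow 2) = ∫ r in Set.Ioi (0:ℝ), r^2 * g r := by
  simp only [Measure.volumeIoiPow, ENNReal.ofReal]
  rw [integral_withDensity_eq_integral_smul,
        integral_subtype_comap measurableSet_Ioi fun a ↦ Real.toNNReal (a ^ 2) • g a,
        setIntegral_congr_fun measurableSet_Ioi fun x hx ↦ ?_]
  · simp [NNReal.smul_def]
    left; positivity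
  · exact (measurable_subtype_coe.pow_const _).real_toNNReal

lemma polar_a (f : (EuclideanSpace ℝ (Fin 3)) → ℝ) (hf : Integrable f) :
    ∫ x, f x = ∫ w : sphere (0 : (EuclideanSpace ℝ (Fin 3))) 1, (∫ r in Set.Ioi (0:ℝ), r^2 * f (r • (w:(EuclideanSpace ℝ (Fin 3))))) ∂(volume : Measure (EuclideanSpace ℝ (Fin 3))).toSphere := by
  obtain ⟨h1, h2⟩ := polar_pre f hf
  rw [h2, integral_prod _ h1]
  congr 1
  funext w
  exact integral_Ioi_pow (fun r => f (r • (w:(EuclideanSpace ℝ (Fin 3)))))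

lemma polar_b (f : (EuclideanSpace ℝ (Fin 3)) → ℝ) (hf : Integrable f) :
    ∫ x, f x = ∫ r in Set.Ioi (0:ℝ), r^2 * (∫ w : sphere (0 : (EuclideanSpace ℝ (Fin 3))) 1, f (r • (w:(EuclideanSpace ℝ (Fin 3)))) ∂(volume : Measure (EuclideanSpace ℝ (Fin 3))).toSphere) := by
  obtain ⟨h1, h2⟩ := polar_pre f hf
  rw [h2, integral_prod_symm _ h1]
  exact integral_Ioi_pow (fun r => ∫ w : sphere (0 : (EuclideanSpace ℝ (Fin 3))) 1, f (r • (w:(EuclideanSpace ℝ (Fin 3)))) ∂(volume : Measure (EuclideanSpace ℝ (Fin 3))).toSphere)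

/-- annulus -/
def ann (a b : ℝ) : Set (EuclideanSpace ℝ (Fin 3)) := {x | a < ‖x‖ ∧ ‖x‖ < b}

lemma ann_meas (a b : ℝ) : MeasurableSet (ann a b) :=
  ((isOpen_lt continuous_const continuous_norm).inter (isOpen_lt continuous_norm continuous_const)).measurableSet

lemma ann_ind (a b : ℝ) (ha : 0 < a) (f : (EuclideanSpace ℝ (Fin 3)) → ℝ) (w : sphere (0:(EuclideanSpace ℝ (Fin 3))) 1) (r : ℝ) (hr : r ∈ Set.Ioi (0:ℝ)) :
    (ann a b).indicator f (r • (w:(EuclideanSpace ℝ (Fin 3)))) = (Set.Ioo a b).indicator (fun r => f (r • (w:(EuclideanSpace ℝ (Fin 3))))) r := by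
  have hw : ‖(w:(EuclideanSpace ℝ (Fin 3)))‖ = 1 := by simpa using w.2
  have : ‖r • (w:(EuclideanSpace ℝ (Fin 3)))‖ = r := by rw [norm_smul, hw, mul_one, Real.norm_of_nonneg (le_of_lt hr)]
  simp [Set.indicator, ann, this]

lemma polar_ann_a (a b : ℝ) (ha : 0 < a) (hab : a ≤ b) (f : (EuclideanSpace ℝ (Fin 3)) → ℝ) (hf : IntegrableOn f (ann a b)) :
    ∫ x in ann a b, f x =
      ∫ w : sphere (0 : (EuclideanSpace ℝ (Fin 3))) 1, (∫ r in a..b, r^2 * f (r • (w:(EuclideanSpace ℝ (Fin 3))))) ∂(volume : Measure (EuclideanSpace ℝ (Fin 3))).toSphere := by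
  rw [← integral_indicator (ann_meas a b), polar_a _ (hf.integrable_indicator (ann_meas a b))]
  congr 1
  funext w
  rw [intervalIntegral.integral_of_le hab, integral_Ioc_eq_integral_Ioo]
  rw [setIntegral_congr_fun (g := (Set.Ioo a b).indicator (fun r => r^2 * f (r • (w:(EuclideanSpace ℝ (Fin 3)))))) measurableSet_Ioi]
  · rw [setIntegral_indicator measurableSet_Ioo]
    congr 2
    ext r; simp; intro h _; exact ha.trans h
  · intro r hr
    simp only
    rw [ann_ind a b ha f w r hr]
    simp [Set.indicator]

lemma polar_ann_b (a b : ℝ) (ha : 0 < a) (f : (EuclideanSpace ℝ (Fin 3)) → ℝ) (hf : IntegrableOn f (ann a b)) :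
    ∫ x in ann a b, f x =
      ∫ r in Set.Ioo a b, r^2 * ∫ w : sphere (0 : (EuclideanSpace ℝ (Fin 3))) 1, f (r • (w:(EuclideanSpace ℝ (Fin 3)))) ∂(volume : Measure (EuclideanSpace ℝ (Fin 3))).toSphere := by
  rw [← integral_indicator (ann_meas a b), polar_b _ (hf.integrable_indicator (ann_meas a b))]
  rw [setIntegral_congr_fun (g := (Set.Ioo a b).indicator (fun r => r^2 * ∫ w : sphere (0 : (EuclideanSpace ℝ (Fin 3))) 1, f (r • (w:(EuclideanSpace ℝ (Fin 3)))) ∂(volume : Measure (EuclideanSpace ℝ (Fin 3))).toSphere)) measurableSet_Ioi]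
  · rw [setIntegral_indicator measurableSet_Ioo]
    congr 2
    ext r; simp; intro h _; exact ha.trans h
  · intro r hr
    simp only
    simp_rw [ann_ind a b ha f _ r hr]
    by_cases h : r ∈ Set.Ioo a b
    · simp [Set.indicator_of_mem h]
    · simp [Set.indicator_of_notMem h]
/-- truncated Newton potential -/
noncomputable def psi (ε R : ℝ) (x : (EuclideanSpace ℝ (Fin 3))) : ℝ := R⁻¹ - (max ε (min ‖x‖ R))⁻¹

lemma psi_lip (ε R : ℝ) (hε : 0 < ε) : ∃ C, LipschitzWith C (psi ε R) := by
  refine ⟨Real.toNNReal (ε⁻¹ ^ 2), LipschitzWith.of_dist_le_mul fun x y => ?_⟩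
  rw [Real.coe_toNNReal _ (by positivity), Real.dist_eq]
  have h1 : |max ε (min ‖x‖ R) - max ε (min ‖y‖ R)| ≤ dist x y := by
    have a : |max ε (min ‖x‖ R) - max ε (min ‖y‖ R)| ≤ |min ‖x‖ R - min ‖y‖ R| := by
      rw [max_comm ε, max_comm ε]
      exact abs_max_sub_max_le_abs _ _ _
    have b : |min ‖x‖ R - min ‖y‖ R| ≤ |‖x‖ - ‖y‖| := by
      have := abs_min_sub_min_le_max ‖x‖ R ‖y‖ R
      simpa using this
    exact a.trans (b.trans (by rw [dist_eq_norm]; exact abs_norm_sub_norm_le x y))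
  unfold psi
  set p := max ε (min ‖x‖ R) with hp
  set q := max ε (min ‖y‖ R) with hq
  have hp1 : ε ≤ p := le_max_left _ _
  have hq1 : ε ≤ q := le_max_left _ _
  have hp0 : 0 < p := hε.trans_le hp1
  have hq0 : 0 < q := hε.trans_le hq1
  have : R⁻¹ - p⁻¹ - (R⁻¹ - q⁻¹) = p⁻¹ * q⁻¹ * (p - q) := by field_simp; ring
  rw [this, abs_mul, abs_of_pos (by positivity : 0 < p⁻¹ * q⁻¹), pow_two]
  gcongr

lemma psi_abs (ε R : ℝ) (hε : 0 < ε) (hR : ε < R) (x : (EuclideanSpace ℝ (Fin 3))) : |psi ε R x| ≤ ε⁻¹ := by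
  unfold psi
  set p := max ε (min ‖x‖ R) with hp
  have hp1 : ε ≤ p := le_max_left _ _
  have hp2 : p ≤ R := max_le hR.le (min_le_right _ _)
  have hp0 : 0 < p := hε.trans_le hp1
  have h1 : p⁻¹ ≤ ε⁻¹ := by gcongr
  have h2 : R⁻¹ ≤ p⁻¹ := by gcongr
  have h3 : 0 < R⁻¹ := by have := hε.trans hR; positivity
  rw [abs_le]; constructor <;> linarith

lemma psi_zero (ε R : ℝ) (hR : ε < R) (x : (EuclideanSpace ℝ (Fin 3))) (hx : R ≤ ‖x‖) : psi ε R x = 0 := by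
  unfold psi
  rw [min_eq_right hx, max_eq_right hR.le, sub_self]

lemma psi_deriv_ann (ε R : ℝ) (hε : 0 < ε) (x v : (EuclideanSpace ℝ (Fin 3))) (hx : x ∈ ann ε R) :
    lineDeriv ℝ (psi ε R) x v = (‖x‖ ^ 3)⁻¹ * inner ℝ x v := by
  apply HasLineDerivAt.lineDeriv
  have hx0 : 0 < ‖x‖ := hε.trans hx.1
  have hc : Continuous (fun t : ℝ => ‖x + t • v‖) := by fun_prop
  have h1 : HasDerivAt (fun t : ℝ => ‖x + t • v‖ ^ 2) (2 * inner ℝ x v) 0 := by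
    have h0 : HasDerivAt (fun t : ℝ => x + t • v) v 0 := by
      simpa using ((hasDerivAt_id (0:ℝ)).smul_const v).const_add x
    simpa using h0.norm_sq
  have h2 : HasDerivAt (fun t : ℝ => ‖x + t • v‖) (‖x‖⁻¹ * inner ℝ x v) 0 := by
    have := h1.sqrt (by simp; exact norm_pos_iff.1 hx0)
    simp only [Real.sqrt_sq (norm_nonneg _)] at this
    convert this using 1
    simp only [zero_smul, add_zero]; field_simp
  have h3 : HasDerivAt (fun t : ℝ => R⁻¹ - (‖x + t • v‖)⁻¹) ((‖x‖ ^ 3)⁻¹ * inner ℝ x v) 0 := by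
    refine ((h2.inv (by simp; exact norm_pos_iff.1 hx0)).const_sub R⁻¹).congr_deriv ?_
    simp only [zero_smul, add_zero]; field_simp
  refine h3.congr_of_eventuallyEq ?_
  have e1 : ∀ᶠ t : ℝ in nhds 0, ε < ‖x + t • v‖ :=
    hc.continuousAt.eventually_const_lt (by simpa using hx.1)
  have e2 : ∀ᶠ t : ℝ in nhds 0, ‖x + t • v‖ < R :=
    hc.continuousAt.eventually_lt_const (by simpa using hx.2)
  filter_upwards [e1, e2] with t a b
  unfold psi
  rw [min_eq_left b.le, max_eq_right a.le]

lemma psi_deriv_off (ε R : ℝ) (hR : ε < R) (x v : (EuclideanSpace ℝ (Fin 3))) (hx : ‖x‖ < ε ∨ R < ‖x‖) :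
    lineDeriv ℝ (psi ε R) x v = 0 := by
  apply HasLineDerivAt.lineDeriv
  have hc : Continuous (fun t : ℝ => ‖x + t • v‖) := by fun_prop
  rcases hx with hx | hx
  · refine (hasDerivAt_const (0:ℝ) (R⁻¹ - ε⁻¹)).congr_of_eventuallyEq ?_
    have e2 : ∀ᶠ t : ℝ in nhds 0, ‖x + t • v‖ < ε :=
      hc.continuousAt.eventually_lt_const (by simpa using hx)
    filter_upwards [e2] with t b
    unfold psi
    rw [min_eq_left (b.trans hR).le, max_eq_left b.le]
  · refine (hasDerivAt_const (0:ℝ) (0:ℝ)).congr_of_eventuallyEq ?_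
    have e1 : ∀ᶠ t : ℝ in nhds 0, R < ‖x + t • v‖ :=
      hc.continuousAt.eventually_const_lt (by simpa using hx)
    filter_upwards [e1] with t b
    exact psi_zero ε R hR _ b.le

lemma psi_deriv_ae (ε R : ℝ) (hε : 0 < ε) (hR : ε < R) :
    ∀ᵐ x : (EuclideanSpace ℝ (Fin 3)), ∀ v, lineDeriv ℝ (psi ε R) x v = (ann ε R).indicator (fun x => (‖x‖ ^ 3)⁻¹ * inner ℝ x v) x := by
  have h1 : ∀ᵐ x : (EuclideanSpace ℝ (Fin 3)), x ∉ sphere (0:(EuclideanSpace ℝ (Fin 3))) ε := by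
    rw [ae_iff]; simp only [not_not]; exact Measure.addHaar_sphere (volume : Measure (EuclideanSpace ℝ (Fin 3))) 0 ε
  have h2 : ∀ᵐ x : (EuclideanSpace ℝ (Fin 3)), x ∉ sphere (0:(EuclideanSpace ℝ (Fin 3))) R := by
    rw [ae_iff]; simp only [not_not]; exact Measure.addHaar_sphere (volume : Measure (EuclideanSpace ℝ (Fin 3))) 0 R
  filter_upwards [h1, h2] with x a b v
  rw [mem_sphere_zero_iff_norm] at a b
  by_cases hx : x ∈ ann ε R
  · rw [Set.indicator_of_mem hx, psi_deriv_ann ε R hε x v hx]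
  · rw [Set.indicator_of_notMem hx]
    apply psi_deriv_off ε R hR
    by_contra hcon
    push Not at hcon
    exact hx ⟨lt_of_le_of_ne hcon.1 (Ne.symm a), lt_of_le_of_ne hcon.2 b⟩

lemma ann_integrable (a b : ℝ) (f : (EuclideanSpace ℝ (Fin 3)) → ℝ) (hf : ContinuousOn f {x | a ≤ ‖x‖ ∧ ‖x‖ ≤ b}) :
    IntegrableOn f (ann a b) := by
  have hK : IsCompact {x : (EuclideanSpace ℝ (Fin 3)) | a ≤ ‖x‖ ∧ ‖x‖ ≤ b} := by
    have : {x : (EuclideanSpace ℝ (Fin 3)) | a ≤ ‖x‖ ∧ ‖x‖ ≤ b} = closedBall 0 b ∩ {x | a ≤ ‖x‖} := by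
      ext x; simp [and_comm]
    rw [this]
    exact (isCompact_closedBall _ _).inter_right (isClosed_le continuous_const continuous_norm)
  exact (hf.integrableOn_compact hK).mono_set fun x hx => ⟨hx.1.le, hx.2.le⟩

lemma green (w : (EuclideanSpace ℝ (Fin 3)) → ℝ) (hw : ContDiff ℝ 2 w) (hc : HasCompactSupport w) (ε R : ℝ) (hε : 0 < ε) (hR : ε < R) :
    ∫ x in ann ε R, (‖x‖ ^ 3)⁻¹ * fderiv ℝ w x x = - ∫ x, lap w x * psi ε R x := by
  obtain ⟨C, hC⟩ := psi_lip ε R hε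
  let g : Fin 3 → (EuclideanSpace ℝ (Fin 3)) → ℝ := fun i y => fderiv ℝ w y (EuclideanSpace.single i (1 : ℝ))
  have hg : ∀ i, ContDiff ℝ 1 (g i) := fun i =>
    (hw.fderiv_right (m := 1) (by norm_num)).clm_apply contDiff_const
  have hgc : ∀ i, HasCompactSupport (g i) := fun i => hc.fderiv_apply (𝕜 := ℝ) _
  have hgd : ∀ i, Continuous (fun x => fderiv ℝ (g i) x (EuclideanSpace.single i (1 : ℝ))) := fun i =>
    ((hg i).continuous_fderiv (by norm_num)).clm_apply continuous_const
  have parts : ∀ i, ∫ x, lineDeriv ℝ (psi ε R) x (EuclideanSpace.single i (1 : ℝ)) * g i x =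
      - ∫ x, fderiv ℝ (g i) x (EuclideanSpace.single i (1 : ℝ)) * psi ε R x := by
    intro i
    obtain ⟨D, hD⟩ := ContDiff.lipschitzWith_of_hasCompactSupport (hgc i) (hg i) (by simp)
    rw [LipschitzWith.integral_lineDeriv_mul_eq hC hD (hgc i), ← integral_neg]
    congr 1; funext x
    rw [(((hg i).differentiable (by simp)) x).lineDeriv_eq_fderiv]
    simp
  have i1 : ∀ i, Integrable (fun x => fderiv ℝ (g i) x (EuclideanSpace.single i (1 : ℝ)) * psi ε R x) := by
    intro i
    refine ((hgd i).mul hC.continuous).integrable_of_hasCompactSupport ?_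
    exact ((hgc i).fderiv_apply (𝕜 := ℝ) _).mul_right
  have rhs : ∫ x, lap w x * psi ε R x = ∑ i, ∫ x, fderiv ℝ (g i) x (EuclideanSpace.single i (1 : ℝ)) * psi ε R x := by
    rw [← integral_finsetSum _ (fun i _ => i1 i)]
    congr 1; funext x
    rw [lap, Finset.sum_mul]
  rw [rhs, ← Finset.sum_neg_distrib]
  simp_rw [← parts]
  have i2 : ∀ i, IntegrableOn (fun x => (‖x‖ ^ 3)⁻¹ * inner ℝ x (EuclideanSpace.single i (1 : ℝ)) * g i x) (ann ε R) := by
    intro i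
    apply ann_integrable
    refine ContinuousOn.mul (ContinuousOn.mul (ContinuousOn.inv₀ (by fun_prop) ?_) (by fun_prop)) (hg i).continuous.continuousOn
    intro x hx
    have : 0 < ‖x‖ := hε.trans_le hx.1
    positivity
  have lhs : ∀ i, ∫ x, lineDeriv ℝ (psi ε R) x (EuclideanSpace.single i (1 : ℝ)) * g i x =
      ∫ x in ann ε R, (‖x‖ ^ 3)⁻¹ * inner ℝ x (EuclideanSpace.single i (1 : ℝ)) * g i x := by
    intro i
    rw [← integral_indicator (ann_meas _ _)]
    apply integral_congr_ae
    filter_upwards [psi_deriv_ae ε R hε hR] with x hx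
    rw [hx]
    by_cases h : x ∈ ann ε R
    · simp [Set.indicator_of_mem h]
    · simp [Set.indicator_of_notMem h]
  simp_rw [lhs]
  rw [← integral_finsetSum _ (fun i _ => i2 i)]
  congr 1; funext x
  have hxs : x = ∑ i, x i • EuclideanSpace.single i (1:ℝ) := by
    ext j; simp [Finset.sum_apply, Pi.single_apply]
  have : fderiv ℝ w x x = ∑ i, x i * g i x := by
    conv_lhs => arg 2; rw [hxs]
    simp [g]
  rw [this, Finset.mul_sum]
  refine Finset.sum_congr rfl fun i _ => ?_
  simp [EuclideanSpace.inner_single_right]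
  ring

lemma radial (w : (EuclideanSpace ℝ (Fin 3)) → ℝ) (hw : ContDiff ℝ 2 w) (ε R : ℝ) (hε : 0 < ε) (hR : ε < R) :
    ∫ x in ann ε R, (‖x‖ ^ 3)⁻¹ * fderiv ℝ w x x =
      (∫ o : sphere (0 : (EuclideanSpace ℝ (Fin 3))) 1, w (R • (o:(EuclideanSpace ℝ (Fin 3)))) ∂(volume : Measure (EuclideanSpace ℝ (Fin 3))).toSphere) -
      ∫ o : sphere (0 : (EuclideanSpace ℝ (Fin 3))) 1, w (ε • (o:(EuclideanSpace ℝ (Fin 3)))) ∂(volume : Measure (EuclideanSpace ℝ (Fin 3))).toSphere := by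
  have hd : Continuous (fderiv ℝ w) := hw.continuous_fderiv (by norm_num)
  rw [polar_ann_a ε R hε hR.le]
  · have hi : ∀ r : ℝ, Integrable (fun o : sphere (0 : (EuclideanSpace ℝ (Fin 3))) 1 => w (r • (o:(EuclideanSpace ℝ (Fin 3))))) (volume : Measure (EuclideanSpace ℝ (Fin 3))).toSphere := by
      intro r
      have hcont : Continuous (fun o : sphere (0 : (EuclideanSpace ℝ (Fin 3))) 1 => w (r • (o:(EuclideanSpace ℝ (Fin 3))))) :=
        hw.continuous.comp (by fun_prop)
      exact hcont.integrable_of_hasCompactSupport (HasCompactSupport.of_compactSpace _)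
    rw [← integral_sub (hi R) (hi ε)]
    congr 1; funext o
    have ho : ‖(o:(EuclideanSpace ℝ (Fin 3)))‖ = 1 := by simp
    have hder : ∀ r : ℝ, HasDerivAt (fun r : ℝ => w (r • (o:(EuclideanSpace ℝ (Fin 3))))) (fderiv ℝ w (r • (o:(EuclideanSpace ℝ (Fin 3)))) o) r := by
      intro r
      have h0 : HasDerivAt (fun t : ℝ => t • (o:(EuclideanSpace ℝ (Fin 3)))) (o:(EuclideanSpace ℝ (Fin 3))) r := by
        simpa using (hasDerivAt_id r).smul_const (o:(EuclideanSpace ℝ (Fin 3)))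
      exact ((hw.differentiable (by norm_num)) (r • (o:(EuclideanSpace ℝ (Fin 3))))).hasFDerivAt.comp_hasDerivAt r h0
    rw [← intervalIntegral.integral_eq_sub_of_hasDerivAt (fun r _ => hder r)]
    · apply intervalIntegral.integral_congr
      intro r hr
      rw [Set.uIcc_of_le hR.le] at hr
      have hr0 : 0 < r := hε.trans_le hr.1
      simp only [norm_smul, ho, mul_one, Real.norm_of_nonneg hr0.le, map_smul, smul_eq_mul]
      field_simp
    · apply Continuous.intervalIntegrable
      exact (hd.comp (by fun_prop)).clm_apply continuous_const
  · apply ann_integrable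
    refine ContinuousOn.mul (ContinuousOn.inv₀ (by fun_prop) ?_) (hd.clm_apply continuous_id).continuousOn
    intro x hx
    have : 0 < ‖x‖ := hε.trans_le hx.1
    positivity

lemma lap_cont (w : (EuclideanSpace ℝ (Fin 3)) → ℝ) (hw : ContDiff ℝ 2 w) : Continuous (lap w) := by
  unfold lap
  refine continuous_finsetSum _ fun i _ => ?_
  have : ContDiff ℝ 1 (fun y => fderiv ℝ w y (EuclideanSpace.single i (1 : ℝ))) :=
    (hw.fderiv_right (m := 1) (by norm_num)).clm_apply contDiff_const
  exact (this.continuous_fderiv (by norm_num)).clm_apply continuous_const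

lemma mean_bound (w : (EuclideanSpace ℝ (Fin 3)) → ℝ) (hw : ContDiff ℝ 2 w) (hc : HasCompactSupport w) (ε R : ℝ) (hε : 0 < ε) (hR : ε < R)
    (hR1 : R ≤ 1) :
    (∫ o : sphere (0 : (EuclideanSpace ℝ (Fin 3))) 1, w (R • (o:(EuclideanSpace ℝ (Fin 3)))) ∂(volume : Measure (EuclideanSpace ℝ (Fin 3))).toSphere) ≤
      (∫ o : sphere (0 : (EuclideanSpace ℝ (Fin 3))) 1, w (ε • (o:(EuclideanSpace ℝ (Fin 3)))) ∂(volume : Measure (EuclideanSpace ℝ (Fin 3))).toSphere) +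
       ε⁻¹ * ∫ x in ball (0:(EuclideanSpace ℝ (Fin 3))) 1, |lap w x| := by
  rw [← sub_le_iff_le_add', ← radial w hw ε R hε hR, green w hw hc ε R hε hR]
  have hl := lap_cont w hw
  obtain ⟨C, hC⟩ := psi_lip ε R hε
  have hz : ∀ x ∉ ball (0:(EuclideanSpace ℝ (Fin 3))) 1, lap w x * psi ε R x = 0 := by
    intro x hx
    rw [psi_zero ε R hR x, mul_zero]
    simp at hx; linarith
  have iB : ∀ f : (EuclideanSpace ℝ (Fin 3)) → ℝ, Continuous f → IntegrableOn f (ball 0 1) := fun f hf =>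
    (hf.continuousOn.integrableOn_compact (isCompact_closedBall (0:(EuclideanSpace ℝ (Fin 3))) 1)).mono_set ball_subset_closedBall
  rw [← setIntegral_eq_integral_of_forall_compl_eq_zero hz, ← integral_neg, ← integral_const_mul]
  apply integral_mono (iB _ (hl.mul hC.continuous).neg) (iB _ (hl.abs.const_smul ε⁻¹))
  intro x
  calc -(lap w x * psi ε R x) ≤ |lap w x * psi ε R x| := neg_le_abs _
    _ = |psi ε R x| * |lap w x| := by rw [abs_mul, mul_comm]
    _ ≤ _ := by
      exact mul_le_mul_of_nonneg_right (psi_abs ε R hε hR x) (abs_nonneg _)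

lemma haus_avg (ε : ℝ) (hε : 0 < ε) (w : (EuclideanSpace ℝ (Fin 3)) → ℝ) (hw : Continuous w) :
    ∫ o : sphere (0 : (EuclideanSpace ℝ (Fin 3))) 1, w (ε • (o:(EuclideanSpace ℝ (Fin 3)))) ∂(volume : Measure (EuclideanSpace ℝ (Fin 3))).toSphere =
      (volume : Measure (EuclideanSpace ℝ (Fin 3))).toSphere.real Set.univ * ⨍ x in sphere (0 : (EuclideanSpace ℝ (Fin 3))) ε, w x ∂(μH[2]) := by
  have hm : Measurable (fun w : sphere (0 : (EuclideanSpace ℝ (Fin 3))) 1 => ε • (w : (EuclideanSpace ℝ (Fin 3)))) :=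
    Continuous.measurable (by fun_prop)
  have : IsFiniteMeasure (sig ε) := by unfold sig; infer_instance
  have : IsFiniteMeasure ((μH[2] : Measure (EuclideanSpace ℝ (Fin 3))).restrict (sphere 0 ε)) :=
    ⟨by rw [Measure.restrict_apply_univ]; exact haus_fin ε hε⟩
  have hx0 : ε • EuclideanSpace.single (0 : Fin 3) (1:ℝ) ∈ sphere (0:(EuclideanSpace ℝ (Fin 3))) ε := by
    simp [norm_smul, abs_of_pos hε]
  have hsph : MeasurableSet (sphere (0:(EuclideanSpace ℝ (Fin 3))) ε) := isClosed_sphere.measurableSet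
  have hn : ∀ x ∈ sphere (0:(EuclideanSpace ℝ (Fin 3))) ε, ‖x‖ = ‖ε • EuclideanSpace.single (0 : Fin 3) (1:ℝ)‖ := by
    intro x hx
    rw [mem_sphere_zero_iff_norm] at hx hx0
    rw [hx, hx0]
  have key := unif_meas (sphere (0:(EuclideanSpace ℝ (Fin 3))) ε) (isCompact_sphere _ _) (sig ε)
    ((μH[2] : Measure (EuclideanSpace ℝ (Fin 3))).restrict (sphere 0 ε))
    (by
      rw [sig, Measure.map_apply hm hsph.compl]
      convert measure_empty (μ := (volume : Measure (EuclideanSpace ℝ (Fin 3))).toSphere)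
      ext o
      simp [norm_smul, abs_of_pos hε])
    (by rw [Measure.restrict_apply hsph.compl]; simp)
    _ _ (fun x hx r => sig_ball ε x _ (hn x hx) r) (fun x hx r => haus_ball ε x _ (hn x hx) r) w hw
  have e1 : ∫ x, w x ∂(sig ε) = ∫ o : sphere (0 : (EuclideanSpace ℝ (Fin 3))) 1, w (ε • (o:(EuclideanSpace ℝ (Fin 3)))) ∂(volume : Measure (EuclideanSpace ℝ (Fin 3))).toSphere := by
    rw [sig, integral_map hm.aemeasurable hw.aestronglyMeasurable]
  have e2 : (sig ε).real Set.univ = (volume : Measure (EuclideanSpace ℝ (Fin 3))).toSphere.real Set.univ := by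
    rw [Measure.real, sig, Measure.map_apply hm MeasurableSet.univ]; rfl
  rw [e1, e2] at key
  have hpos : ((μH[2] : Measure (EuclideanSpace ℝ (Fin 3))).restrict (sphere 0 ε)).real Set.univ ≠ 0 := by
    rw [Measure.real, Measure.restrict_apply_univ]
    exact (ENNReal.toReal_pos (haus_pos ε hε) (haus_fin ε hε).ne).ne'
  rw [average_eq, smul_eq_mul]
  field_simp
  linarith [key]

lemma est_compact (ε : ℝ) (hε : ε ∈ Set.Ioo (0 : ℝ) (1 / 2)) (w : (EuclideanSpace ℝ (Fin 3)) → ℝ) (hw : ContDiff ℝ 2 w)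
    (hc : HasCompactSupport w) (hpos : ∀ x ∈ ball (0 : (EuclideanSpace ℝ (Fin 3))) 1, 0 ≤ w x) :
    (∫ x in ball (0 : (EuclideanSpace ℝ (Fin 3))) 1, w x) ≤
        (1 + (volume : Measure (EuclideanSpace ℝ (Fin 3))).toSphere.real Set.univ + ε⁻¹) *
        ((∫ x in ball (0 : (EuclideanSpace ℝ (Fin 3))) 1, |lap w x|) +
          (∫ x in ball (0 : (EuclideanSpace ℝ (Fin 3))) ε, w x) +
          ⨍ x in sphere (0 : (EuclideanSpace ℝ (Fin 3))) ε, w x ∂(μH[2])) := by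
  have h0 := hε.1
  have h1 : ε < 1 := hε.2.trans (by norm_num)
  have iB : IntegrableOn w (closedBall 0 1) :=
    hw.continuous.continuousOn.integrableOn_compact (isCompact_closedBall (0:(EuclideanSpace ℝ (Fin 3))) 1)
  have hun : ball (0:(EuclideanSpace ℝ (Fin 3))) 1 = closedBall 0 ε ∪ ann ε 1 := by
    ext x
    simp only [mem_ball_zero_iff, Set.mem_union, mem_closedBall_zero_iff, ann, Set.mem_ofPred_eq]
    constructor
    · intro h
      rcases le_or_gt ‖x‖ ε with h' | h'
      · exact Or.inl h'
      · exact Or.inr ⟨h', h⟩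
    · rintro (h | h)
      · linarith
      · exact h.2
  have hdis : Disjoint (closedBall (0:(EuclideanSpace ℝ (Fin 3))) ε) (ann ε 1) := by
    rw [Set.disjoint_left]
    intro x hx hx'
    rw [mem_closedBall_zero_iff] at hx
    exact absurd hx'.1 (not_lt.2 hx)
  have ia : IntegrableOn w (ann ε 1) := ann_integrable _ _ _ hw.continuous.continuousOn
  have hsplit : ∫ x in ball (0 : (EuclideanSpace ℝ (Fin 3))) 1, w x = (∫ x in ball (0:(EuclideanSpace ℝ (Fin 3))) ε, w x) + ∫ x in ann ε 1, w x := by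
    rw [hun, setIntegral_union hdis (ann_meas _ _) (iB.mono_set (closedBall_subset_closedBall h1.le)) ia]
    congr 1
    apply setIntegral_congr_set
    rw [← ball_union_sphere]
    exact union_ae_eq_left_of_ae_eq_empty (ae_eq_empty.2 (Measure.addHaar_sphere volume 0 ε))
  set A := ∫ x in ball (0 : (EuclideanSpace ℝ (Fin 3))) 1, |lap w x| with hA
  set I := ∫ x in ball (0 : (EuclideanSpace ℝ (Fin 3))) ε, w x with hI
  set m := ⨍ x in sphere (0 : (EuclideanSpace ℝ (Fin 3))) ε, w x ∂(μH[2]) with hm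
  set S := (volume : Measure (EuclideanSpace ℝ (Fin 3))).toSphere.real Set.univ with hS
  have hA0 : 0 ≤ A := integral_nonneg fun x => abs_nonneg _
  have hI0 : 0 ≤ I := setIntegral_nonneg measurableSet_ball fun x hx =>
    hpos x (ball_subset_ball h1.le hx)
  have hM0 : ∀ r ∈ Set.Ioo (0:ℝ) 1, 0 ≤ ∫ o : sphere (0 : (EuclideanSpace ℝ (Fin 3))) 1, w (r • (o:(EuclideanSpace ℝ (Fin 3)))) ∂(volume : Measure (EuclideanSpace ℝ (Fin 3))).toSphere := by
    intro r hr
    apply integral_nonneg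
    intro o
    apply hpos
    simp [norm_smul, abs_of_pos hr.1, hr.2]
  have hm0 : 0 ≤ m := by
    rw [hm, average_eq, smul_eq_mul]
    refine mul_nonneg (by positivity) (setIntegral_nonneg isClosed_sphere.measurableSet fun x hx => hpos x ?_)
    rw [mem_sphere_zero_iff_norm] at hx
    rw [mem_ball_zero_iff, hx]; exact h1
  have hS0 : 0 ≤ S := measureReal_nonneg
  have hK : ∫ x in ann ε 1, w x ≤ S * m + ε⁻¹ * A := by
    have hK0 : 0 ≤ S * m + ε⁻¹ * A := by positivity
    rw [polar_ann_b ε 1 h0 w ia]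
    refine (le_abs_self _).trans ?_
    have := norm_setIntegral_le_of_norm_le_const (μ := volume) (s := Set.Ioo ε 1)
      (f := fun r : ℝ => r^2 * ∫ o : sphere (0 : (EuclideanSpace ℝ (Fin 3))) 1, w (r • (o:(EuclideanSpace ℝ (Fin 3)))) ∂(volume : Measure (EuclideanSpace ℝ (Fin 3))).toSphere)
      (C := S * m + ε⁻¹ * A) (by simp) (by
        intro r hr
        have hr' : r ∈ Set.Ioo (0:ℝ) 1 := ⟨h0.trans hr.1, hr.2⟩
        have a := mean_bound w hw hc ε r h0 hr.1 hr.2.le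
        rw [haus_avg ε h0 w hw.continuous] at a
        have b := hM0 r hr'
        rw [Real.norm_of_nonneg (mul_nonneg (sq_nonneg r) b)]
        refine le_trans ?_ a
        have : r ^ 2 ≤ 1 := by nlinarith [hr'.1, hr'.2]
        nlinarith)
    refine this.trans ?_
    rw [Real.volume_real_Ioo_of_le h1.le]
    nlinarith
  rw [hsplit]
  have hi : 0 < ε⁻¹ := by positivity
  nlinarith [mul_nonneg hS0 hA0, mul_nonneg hS0 hI0, mul_nonneg hi.le hI0, mul_nonneg hi.le hm0]

lemma exists_ext (u : (EuclideanSpace ℝ (Fin 3)) → ℝ) (s : Set (EuclideanSpace ℝ (Fin 3))) (hs : IsOpen s) (hsub : closedBall (0:(EuclideanSpace ℝ (Fin 3))) 1 ⊆ s)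
    (hu : ContDiffOn ℝ 2 u s) :
    ∃ w : (EuclideanSpace ℝ (Fin 3)) → ℝ, ContDiff ℝ 2 w ∧ HasCompactSupport w ∧ ∃ δ > 0, ∀ x ∈ ball (0:(EuclideanSpace ℝ (Fin 3))) (1 + δ), w x = u x := by
  obtain ⟨δ, hδ, hd⟩ := (isCompact_closedBall (0:(EuclideanSpace ℝ (Fin 3))) 1).exists_cthickening_subset_open hs hsub
  rw [cthickening_closedBall hδ.le zero_le_one] at hd
  let χ : ContDiffBump (0:(EuclideanSpace ℝ (Fin 3))) := ⟨1 + δ/2, 1 + δ, by positivity, by linarith⟩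
  refine ⟨fun x => χ x * u x, ?_, ?_, δ/2, by positivity, ?_⟩
  · rw [contDiff_iff_contDiffAt]
    intro x
    by_cases hx : x ∈ s
    · exact χ.contDiff.contDiffAt.mul (hu.contDiffAt (hs.mem_nhds hx))
    · have hx' : x ∈ (closedBall (0:(EuclideanSpace ℝ (Fin 3))) (1+δ))ᶜ := fun h => hx (hd (by rwa [add_comm]))
      refine (contDiffAt_const (c := (0:ℝ))).congr_of_eventuallyEq ?_
      filter_upwards [isClosed_closedBall.isOpen_compl.mem_nhds hx'] with y hy
      have : χ y = 0 := by
        apply χ.zero_of_le_dist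
        simp only [Set.mem_compl_iff, mem_closedBall, not_le] at hy
        exact hy.le
      simp [this]
  · exact χ.hasCompactSupport.mul_right
  · intro x hx
    have : χ x = 1 := χ.one_of_mem_closedBall (ball_subset_closedBall hx)
    simp [this]

lemma lap_congr (u w : (EuclideanSpace ℝ (Fin 3)) → ℝ) (U : Set (EuclideanSpace ℝ (Fin 3))) (hU : IsOpen U) (h : ∀ x ∈ U, w x = u x) (x : (EuclideanSpace ℝ (Fin 3))) (hx : x ∈ U) :
    lap w x = lap u x := by
  unfold lap
  refine Finset.sum_congr rfl fun i _ => ?_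
  congr 1
  apply Filter.EventuallyEq.fderiv_eq
  filter_upwards [hU.mem_nhds hx] with y hy
  congr 1
  apply Filter.EventuallyEq.fderiv_eq
  filter_upwards [hU.mem_nhds hy] with z hz using h z hz

/-- L¹ estimate for nonnegative functions on the unit ball `B ⊂ ℝ³`: for
`ε ∈ (0,1/2)` there is `C = C(ε)`, independent of `u`, such that for every `u ≥ 0`
which is `C²` on a neighborhood of the closed unit ball, with `f = Δu`,
`∫_B u ≤ C·(∫_B |f| + ∫_{B(0,ε)} u + u_av(ε))`, where `u_av(ε)` is the mean of `u`
over the sphere of radius `ε` with respect to 2-dimensional Hausdorff measure. -/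
theorem nonneg_L1_estimate
    (ε : ℝ) (hε : ε ∈ Set.Ioo (0 : ℝ) (1 / 2)) :
    ∃ C : ℝ, ∀ (u : EuclideanSpace ℝ (Fin 3) → ℝ)
        (s : Set (EuclideanSpace ℝ (Fin 3))),
      IsOpen s → closedBall (0 : EuclideanSpace ℝ (Fin 3)) 1 ⊆ s →
      ContDiffOn ℝ 2 u s →
      (∀ x ∈ ball (0 : EuclideanSpace ℝ (Fin 3)) 1, 0 ≤ u x) →
      (∫ x in ball (0 : EuclideanSpace ℝ (Fin 3)) 1, u x) ≤
        C * ((∫ x in ball (0 : EuclideanSpace ℝ (Fin 3)) 1, |lap u x|) +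
          (∫ x in ball (0 : EuclideanSpace ℝ (Fin 3)) ε, u x) +
          ⨍ x in sphere (0 : EuclideanSpace ℝ (Fin 3)) ε, u x ∂(μH[2])) := by
  obtain ⟨h0, h12⟩ := hε
  have h1 : ε < 1 := h12.trans (by norm_num)
  refine ⟨1 + (volume : Measure (EuclideanSpace ℝ (Fin 3))).toSphere.real Set.univ + ε⁻¹, fun u s hs hsub hu hpos => ?_⟩
  obtain ⟨w, hw, hc, δ, hδ, hwu⟩ := exists_ext u s hs hsub hu
  have hb : ∀ x ∈ ball (0:(EuclideanSpace ℝ (Fin 3))) 1, x ∈ ball (0:(EuclideanSpace ℝ (Fin 3))) (1 + δ) := fun x hx =>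
    ball_subset_ball (by linarith) hx
  have key := est_compact ε ⟨h0, h12⟩ w hw hc (fun x hx => by rw [hwu x (hb x hx)]; exact hpos x hx)
  have e1 : ∫ x in ball (0:(EuclideanSpace ℝ (Fin 3))) 1, w x = ∫ x in ball (0:(EuclideanSpace ℝ (Fin 3))) 1, u x :=
    setIntegral_congr_fun measurableSet_ball fun x hx => hwu x (hb x hx)
  have e2 : ∫ x in ball (0:(EuclideanSpace ℝ (Fin 3))) ε, w x = ∫ x in ball (0:(EuclideanSpace ℝ (Fin 3))) ε, u x :=
    setIntegral_congr_fun measurableSet_ball fun x hx => hwu x (hb x (ball_subset_ball h1.le hx))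
  have e3 : ∫ x in ball (0:(EuclideanSpace ℝ (Fin 3))) 1, |lap w x| = ∫ x in ball (0:(EuclideanSpace ℝ (Fin 3))) 1, |lap u x| :=
    setIntegral_congr_fun measurableSet_ball fun x hx => by
      rw [lap_congr u w _ isOpen_ball hwu x (hb x hx)]
  have e4 : ⨍ x in sphere (0:(EuclideanSpace ℝ (Fin 3))) ε, w x ∂(μH[2]) = ⨍ x in sphere (0:(EuclideanSpace ℝ (Fin 3))) ε, u x ∂(μH[2]) := by
    rw [average_eq, average_eq]
    congr 1
    refine setIntegral_congr_fun isClosed_sphere.measurableSet fun x hx => hwu x (hb x ?_)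
    rw [mem_sphere_zero_iff_norm] at hx
    rw [mem_ball_zero_iff, hx]; exact h1
  rw [e1, e2, e3, e4] at key
  exact key
end

section
/- Let B = B(0,1) be the open unit ball in Euclidean ℝ³. Let z : B → ℝ^{3×3} be a C¹ field of symmetric 3×3 matrices and s : B → ℝ a C¹ function satisfying the contracted-Bianchi-type relation ∂_i s(x) = −6·∑_{j=1}^{3} ∂_j z_{ij}(x) for all x ∈ B and i = 1,2,3. Then there is an absolute constant C such that ∫_{B(0,1/4)} (s − s̄)² ≤ C·∫_{B(0,1/2)} |z|², where s̄ is the mean value of s over B(0,1/2) and |z|² is the squared Frobenius norm of z. -/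
open MeasureTheory Metric
open scoped FourierTransform SchwartzMap ContDiff

abbrev E3 := EuclideanSpace ℝ (Fin 3)

lemma planch (f : E3 → ℂ) (hf : Integrable f) (h2 : MemLp f 2) :
    MemLp (𝓕 f) 2 ∧ ∫ ξ, ‖𝓕 f ξ‖ ^ 2 = ∫ x, ‖f x‖ ^ 2 := by
  have hloc : LocallyIntegrable (𝓕 f) (volume : Measure E3) := by
    apply Continuous.locallyIntegrable
    exact VectorFourier.fourierIntegral_continuous Real.continuous_fourierChar
      (by exact continuous_inner) hf
  set F : Lp ℂ 2 (volume : Measure E3) := h2.toLp f with hF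
  have hae : ∀ᵐ ξ, (𝓕 F : Lp ℂ 2 (volume : Measure E3)) ξ = 𝓕 f ξ := by
    apply ae_eq_of_integral_contDiff_smul_eq
    · exact (Lp.memLp _).locallyIntegrable (by norm_num)
    · exact hloc
    intro g hg hgc
    have hgC : ContDiff ℝ ∞ (fun x => (g x : ℂ)) := Complex.ofRealCLM.contDiff.comp hg
    have hgcC : HasCompactSupport (fun x => (g x : ℂ)) := hgc.comp_left (g := fun t : ℝ => (t : ℂ)) (by simp)
    let G : 𝓢(E3, ℂ) := hgcC.toSchwartzMap hgC
    have hG : ∀ x, G x = (g x : ℂ) := fun x => rfl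
    have h1 := congrArg (fun T => T G) (Lp.fourier_toTemperedDistribution_eq F)
    simp only [TemperedDistribution.fourier_apply, Lp.toTemperedDistribution_apply] at h1
    have h3 : ∫ x, (𝓕 G) x • F x = ∫ x, (𝓕 G) x • f x := by
      apply integral_congr_ae
      filter_upwards [h2.coeFn_toLp] with x hx
      rw [hx]
    have h4 := VectorFourier.integral_fourierIntegral_smul_eq_flip (μ := volume) (ν := volume)
      (L := innerₗ E3) (f := f) (g := G)
      Real.continuous_fourierChar (by exact continuous_inner) hf G.integrable
    have h5 : ∫ x, (𝓕 G) x • f x = ∫ x, f x • VectorFourier.fourierIntegral Real.fourierChar volume (innerₗ E3).flip G x := by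
      congr 1; ext x; rw [flip_innerₗ, SchwartzMap.fourier_coe, smul_eq_mul, smul_eq_mul, mul_comm]; rfl
    calc ∫ x, g x • (𝓕 F : Lp ℂ 2 (volume : Measure E3)) x = ∫ x, G x • (𝓕 F : Lp ℂ 2 (volume : Measure E3)) x := by
          congr 1
      _ = ∫ x, (𝓕 G) x • f x := by rw [← h1, h3]
      _ = ∫ x, 𝓕 f x • G x := by rw [h5, ← h4]; rfl
      _ = ∫ x, g x • 𝓕 f x := by
          congr 1; ext x; rw [hG, smul_eq_mul, mul_comm]; simp
  have hm : MemLp (𝓕 f) 2 := (memLp_congr_ae hae).1 (Lp.memLp _)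
  refine ⟨hm, ?_⟩
  have e1 : ∀ H : Lp ℂ 2 (volume : Measure E3), ∫ x, ‖H x‖ ^ 2 = ‖H‖ ^ 2 := by
    intro H
    have := L2.inner_def (𝕜 := ℂ) H H
    rw [inner_self_eq_norm_sq_to_K] at this
    have h2 : ∫ a, inner ℂ (H a) (H a) = ((∫ x, ‖H x‖ ^ 2 : ℝ) : ℂ) := by
      rw [← integral_complex_ofReal]; congr 1; ext x; rw [inner_self_eq_norm_sq_to_K]; simp
    rw [h2] at this
    apply Complex.ofReal_injective
    rw [← this]; simp
  calc ∫ ξ, ‖𝓕 f ξ‖ ^ 2 = ∫ ξ, ‖(𝓕 F : Lp ℂ 2 (volume : Measure E3)) ξ‖ ^ 2 := by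
        apply integral_congr_ae; filter_upwards [hae] with x hx; rw [hx]
    _ = ∫ x, ‖F x‖ ^ 2 := by rw [e1, e1, Lp.norm_fourier_eq]
    _ = _ := by apply integral_congr_ae; filter_upwards [h2.coeFn_toLp] with x hx; rw [hx]

noncomputable section

abbrev ee (i : Fin 3) : E3 := EuclideanSpace.single i (1 : ℝ)

structure Nice (f : E3 → ℝ) : Prop where
  cd : ContDiff ℝ 1 f
  supp : HasCompactSupport f

lemma Nice.diff {f : E3 → ℝ} (h : Nice f) : Differentiable ℝ f := h.cd.differentiable (by norm_num)

structure CC (f : E3 → ℝ) : Prop where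
  cont : Continuous f
  supp : HasCompactSupport f

lemma Nice.cc {f : E3 → ℝ} (h : Nice f) : CC f := ⟨h.diff.continuous, h.supp⟩

lemma CC.int {f : E3 → ℝ} (h : CC f) : Integrable f := h.cont.integrable_of_hasCompactSupport h.supp

lemma CC.intSq {f : E3 → ℝ} (h : CC f) : Integrable (fun x => f x ^ 2) := by
  have h1 : Continuous (fun x => f x ^ 2) := by have := h.cont; fun_prop
  have h2 : HasCompactSupport (fun x => f x ^ 2) :=
    h.supp.comp_left (g := fun t : ℝ => t ^ 2) (by simp)
  exact h1.integrable_of_hasCompactSupport h2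

lemma Nice.intF {f : E3 → ℝ} (h : Nice f) : Integrable (fderiv ℝ f) := by
  have h1 : Continuous (fderiv ℝ f) := h.cd.continuous_fderiv (by norm_num)
  have hs : HasCompactSupport (fderiv ℝ f) := h.supp.fderiv (𝕜 := ℝ)
  exact h1.integrable_of_hasCompactSupport hs

/-- Fourier transform of a real function -/
def T (f : E3 → ℝ) : E3 → ℂ := 𝓕 (fun x => (f x : ℂ))

lemma T_add {f g : E3 → ℝ} (hf : Integrable f) (hg : Integrable g) (ξ : E3) :
    T (fun x => f x + g x) ξ = T f ξ + T g ξ := by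
  unfold T
  simp only [Real.fourier_eq, Complex.ofReal_add, smul_add]
  have h1 : Integrable (fun x => (f x : ℂ)) := hf.ofReal
  have h2 : Integrable (fun x => (g x : ℂ)) := hg.ofReal
  apply integral_add
  · exact (Real.fourierIntegral_convergent_iff ξ).2 h1
  · exact (Real.fourierIntegral_convergent_iff ξ).2 h2

lemma T_sum {f : Fin 3 → E3 → ℝ} (hf : ∀ i, Integrable (f i)) (ξ : E3) :
    T (fun x => ∑ i, f i x) ξ = ∑ i, T (f i) ξ := by
  simp only [Fin.sum_univ_three]
  have h01 : Integrable (fun x => f 0 x + f 1 x) := (hf 0).add (hf 1)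
  rw [T_add h01 (hf 2), T_add (hf 0) (hf 1)]

lemma Nice.intD {f : E3 → ℝ} (h : Nice f) (i : Fin 3) :
    Integrable (fun x => fderiv ℝ f x (ee i)) :=
  h.intF.apply_continuousLinearMap (ee i)

lemma T_deriv {f : E3 → ℝ} (h : Nice f) (i : Fin 3) (ξ : E3) :
    T (fun x => fderiv ℝ f x (ee i)) ξ = Complex.I * ((2 * Real.pi * ξ i : ℝ) : ℂ) * T f ξ := by
  have hd : Differentiable ℝ (fun x => (f x : ℂ)) := 
    Complex.ofRealCLM.differentiable.comp h.diff
  have hfd : ∀ x, fderiv ℝ (fun x => (f x : ℂ)) x = Complex.ofRealCLM ∘L fderiv ℝ f x := by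
    intro x
    exact (Complex.ofRealCLM.hasFDerivAt.comp x (h.diff x).hasFDerivAt).fderiv
  have hi : Integrable (fderiv ℝ (fun x => (f x : ℂ))) := by
    have : fderiv ℝ (fun x => (f x : ℂ)) = fun x => (ContinuousLinearMap.compL ℝ E3 ℝ ℂ Complex.ofRealCLM) (fderiv ℝ f x) := by
      ext1 x; rw [hfd]; rfl
    rw [this]
    exact ContinuousLinearMap.integrable_comp _ h.intF
  have key := Real.fourier_fderiv (f := fun x => (f x : ℂ)) h.cc.int.ofReal hd hi
  have k2 := congrArg (fun L => L (ee i)) (congrFun key ξ)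
  simp only [VectorFourier.fourierSMulRight_apply] at k2
  have k3 : (𝓕 (fderiv ℝ (fun x => (f x : ℂ))) ξ) (ee i) = T (fun x => fderiv ℝ f x (ee i)) ξ := by
    unfold T
    rw [Real.fourier_eq, Real.fourier_eq, ContinuousLinearMap.integral_apply]
    · congr 1; ext x; rw [hfd]; rfl
    · exact (Real.fourierIntegral_convergent_iff ξ).2 hi
  rw [← k3, k2]
  have k4 : ((-innerSL ℝ) ξ) (ee i) = - ξ i := by
    simp [EuclideanSpace.inner_single_right]
  rw [k4]
  simp [T]
  ring

lemma planchR {f : E3 → ℝ} (h : CC f) :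
    Integrable (fun ξ => ‖T f ξ‖ ^ 2) ∧ ∫ ξ, ‖T f ξ‖ ^ 2 = ∫ x, f x ^ 2 := by
  have h2 : MemLp (fun x => (f x : ℂ)) 2 := by
    apply Continuous.memLp_of_hasCompactSupport
    · exact Complex.continuous_ofReal.comp h.cont
    · exact h.supp.comp_left (g := fun t : ℝ => (t : ℂ)) (by simp)
  obtain ⟨h3, h4⟩ := planch _ h.int.ofReal h2
  refine ⟨h3.integrable_norm_pow (by norm_num), ?_⟩
  refine h4.trans ?_
  congr 1; ext x; simp

lemma ptwise (û a : ℂ) (t : Fin 3 → ℝ) (b c : Fin 3 → ℂ) (d : Fin 3 → Fin 3 → ℂ)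
    (h1 : û = a + ∑ j, Complex.I * (t j : ℂ) * b j)
    (h2 : ∀ i, Complex.I * (t i : ℂ) * û = c i + ∑ j, Complex.I * (t j : ℂ) * d i j) :
    ‖û‖ ≤ ‖a‖ + ∑ j, ‖b j‖ + ∑ j, ‖c j‖ + ∑ i, ∑ j, ‖d i j‖ := by
  set S : ℝ := 1 + ∑ i, t i ^ 2 with hS
  have hSpos : 1 ≤ S := by
    have : 0 ≤ ∑ i, t i ^ 2 := Finset.sum_nonneg (fun i _ => sq_nonneg _)
    linarith
  have key : (S : ℂ) * û = a + ∑ j, Complex.I * (t j : ℂ) * b j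
      + ∑ i, -(Complex.I * (t i : ℂ)) * (c i + ∑ j, Complex.I * (t j : ℂ) * d i j) := by
    rw [← h1]
    simp only [← h2, hS]
    simp only [Fin.sum_univ_three]
    push_cast
    linear_combination ((t 0 : ℂ) ^ 2 + (t 1 : ℂ)^2 + (t 2 : ℂ)^2) * û * Complex.I_sq
  have ht : ∀ i j, |t i| * |t j| ≤ S := by
    intro i j
    have h1 : t i ^ 2 ≤ ∑ i, t i ^ 2 := Finset.single_le_sum (fun i _ => sq_nonneg (t i)) (Finset.mem_univ i)
    have h2 : t j ^ 2 ≤ ∑ i, t i ^ 2 := Finset.single_le_sum (fun i _ => sq_nonneg (t i)) (Finset.mem_univ j)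
    nlinarith [sq_nonneg (|t i| - |t j|), sq_abs (t i), sq_abs (t j)]
  have ht1 : ∀ i, |t i| ≤ S := by
    intro i
    have h1 : t i ^ 2 ≤ ∑ i, t i ^ 2 := Finset.single_le_sum (fun i _ => sq_nonneg (t i)) (Finset.mem_univ i)
    nlinarith [sq_nonneg (|t i| - 1), sq_abs (t i)]
  have hn : S * ‖û‖ ≤ S * (‖a‖ + ∑ j, ‖b j‖ + ∑ j, ‖c j‖ + ∑ i, ∑ j, ‖d i j‖) := by
    have : S * ‖û‖ = ‖(S : ℂ) * û‖ := by
      rw [norm_mul, Complex.norm_real, Real.norm_of_nonneg (by linarith)]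
    rw [this, key]
    have e1 : ‖∑ j, Complex.I * (t j : ℂ) * b j‖ ≤ S * ∑ j, ‖b j‖ := by
      rw [Finset.mul_sum]
      refine (norm_sum_le _ _).trans (Finset.sum_le_sum fun j _ => ?_)
      simp only [norm_mul, Complex.norm_I, Complex.norm_real, Real.norm_eq_abs, one_mul]
      exact mul_le_mul_of_nonneg_right (ht1 j) (norm_nonneg _)
    have e2 : ‖∑ i, -(Complex.I * (t i : ℂ)) * (c i + ∑ j, Complex.I * (t j : ℂ) * d i j)‖
        ≤ S * (∑ j, ‖c j‖ + ∑ i, ∑ j, ‖d i j‖) := by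
      rw [← Finset.sum_add_distrib, Finset.mul_sum]
      refine (norm_sum_le _ _).trans (Finset.sum_le_sum fun i _ => ?_)
      simp only [norm_mul, norm_neg, Complex.norm_I, Complex.norm_real, Real.norm_eq_abs, one_mul]
      have : ‖c i + ∑ j, Complex.I * (t j : ℂ) * d i j‖ ≤ ‖c i‖ + ∑ j, |t j| * ‖d i j‖ := by
        refine (norm_add_le _ _).trans (add_le_add le_rfl ((norm_sum_le _ _).trans (Finset.sum_le_sum fun j _ => ?_)))
        simp
      refine (mul_le_mul_of_nonneg_left this (abs_nonneg _)).trans ?_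
      rw [mul_add, mul_add, Finset.mul_sum, Finset.mul_sum]
      refine add_le_add (mul_le_mul_of_nonneg_right (ht1 i) (norm_nonneg _)) (Finset.sum_le_sum fun j _ => ?_)
      rw [← mul_assoc]
      exact mul_le_mul_of_nonneg_right (ht i j) (norm_nonneg _)
    have e3 : ‖a‖ ≤ S * ‖a‖ := le_mul_of_one_le_left (norm_nonneg _) hSpos
    refine (norm_add_le _ _).trans ?_
    have := norm_add_le a (∑ j, Complex.I * (t j : ℂ) * b j)
    linarith
  exact le_of_mul_le_mul_left hn (by linarith)

lemma sq_bound (u a : ℝ) (b c : Fin 3 → ℝ) (d : Fin 3 → Fin 3 → ℝ) (hu : 0 ≤ u)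
    (h : u ≤ a + ∑ j, b j + ∑ j, c j + ∑ i, ∑ j, d i j) :
    u ^ 2 ≤ 36 * (a ^ 2 + ∑ j, b j ^ 2 + ∑ j, c j ^ 2 + ∑ i, ∑ j, d i j ^ 2) := by
  have hb : (∑ j, b j) ^ 2 ≤ 3 * ∑ j, b j ^ 2 := by
    simpa using sq_sum_le_card_mul_sum_sq (s := Finset.univ) (f := b)
  have hc : (∑ j, c j) ^ 2 ≤ 3 * ∑ j, c j ^ 2 := by
    simpa using sq_sum_le_card_mul_sum_sq (s := Finset.univ) (f := c)
  have hd : (∑ i, ∑ j, d i j) ^ 2 ≤ 9 * ∑ i, ∑ j, d i j ^ 2 := by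
    have h1 : (∑ i, ∑ j, d i j) ^ 2 ≤ 3 * ∑ i, (∑ j, d i j) ^ 2 := by
      simpa using sq_sum_le_card_mul_sum_sq (s := Finset.univ) (f := fun i => ∑ j, d i j)
    have h2 : ∀ i, (∑ j, d i j) ^ 2 ≤ 3 * ∑ j, d i j ^ 2 := fun i => by
      simpa using sq_sum_le_card_mul_sum_sq (s := Finset.univ) (f := d i)
    have h3 : ∑ i, (∑ j, d i j) ^ 2 ≤ ∑ i, 3 * ∑ j, d i j ^ 2 := Finset.sum_le_sum fun i _ => h2 i
    rw [← Finset.mul_sum] at h3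
    linarith
  have p1 : 0 ≤ ∑ j, b j ^ 2 := Finset.sum_nonneg fun _ _ => sq_nonneg _
  have p2 : 0 ≤ ∑ j, c j ^ 2 := Finset.sum_nonneg fun _ _ => sq_nonneg _
  set B := ∑ j, b j
  set D := ∑ j, c j
  set G := ∑ i, ∑ j, d i j
  have : u ^ 2 ≤ (a + B + D + G) ^ 2 := pow_le_pow_left₀ hu h 2
  nlinarith [sq_nonneg (a - B), sq_nonneg (a - D), sq_nonneg (a - G), sq_nonneg (B - D), sq_nonneg (B - G), sq_nonneg (D - G), sq_nonneg a]

lemma fourierEst {u a : E3 → ℝ} {b c : Fin 3 → E3 → ℝ} {d : Fin 3 → Fin 3 → E3 → ℝ}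
    (hu : Nice u) (ha : CC a) (hb : ∀ j, Nice (b j)) (hc : ∀ j, CC (c j)) (hd : ∀ i j, Nice (d i j))
    (h1 : ∀ x, u x = a x + ∑ j, fderiv ℝ (b j) x (ee j))
    (h2 : ∀ x i, fderiv ℝ u x (ee i) = c i x + ∑ j, fderiv ℝ (d i j) x (ee j)) :
    ∫ x, u x ^ 2 ≤ 36 * ((∫ x, a x ^ 2) + ∑ j, (∫ x, b j x ^ 2) + ∑ j, (∫ x, c j x ^ 2)
      + ∑ i, ∑ j, ∫ x, d i j x ^ 2) := by
  have hpt : ∀ ξ, ‖T u ξ‖ ^ 2 ≤ 36 * (‖T a ξ‖ ^ 2 + ∑ j, ‖T (b j) ξ‖ ^ 2 + ∑ j, ‖T (c j) ξ‖ ^ 2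
      + ∑ i, ∑ j, ‖T (d i j) ξ‖ ^ 2) := by
    intro ξ
    apply sq_bound _ _ _ _ _ (norm_nonneg _)
    apply ptwise (T u ξ) (T a ξ) (fun i => 2 * Real.pi * ξ i)
    · have : u = fun x => a x + ∑ j, fderiv ℝ (b j) x (ee j) := funext h1
      conv_lhs => rw [this]
      rw [T_add ha.int (integrable_finsetSum _ fun j _ => (hb j).intD j), T_sum (fun j => (hb j).intD j)]
      simp only [T_deriv (hb _)]
    · intro i
      rw [← T_deriv hu]
      simp only [h2]
      rw [T_add (hc i).int (integrable_finsetSum _ fun j _ => (hd i j).intD j), T_sum (fun j => (hd i j).intD j)]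
      simp only [T_deriv (hd _ _)]
  rw [← (planchR hu.cc).2, ← (planchR ha).2]
  simp only [← (planchR (hb _).cc).2, ← (planchR (hc _)).2, ← (planchR (hd _ _).cc).2]
  have i1 := (planchR ha).1
  have i2 := fun j => (planchR (hb j).cc).1
  have i3 := fun j => (planchR (hc j)).1
  have i4 := fun i j => (planchR (hd i j).cc).1
  have I2 := integrable_finsetSum Finset.univ (fun j _ => i2 j)
  have I3 := integrable_finsetSum Finset.univ (fun j _ => i3 j)
  have I4' := fun i => integrable_finsetSum Finset.univ (fun j _ => i4 i j)
  have I4 := integrable_finsetSum Finset.univ (fun i _ => I4' i)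
  refine (integral_mono (planchR hu.cc).1 ((((i1.add I2).add I3).add I4).const_mul 36) hpt).trans_eq ?_
  rw [integral_const_mul]
  congr 1
  simp only [Pi.add_apply]
  have I12 : Integrable (fun ξ => ‖T a ξ‖ ^ 2 + ∑ j, ‖T (b j) ξ‖ ^ 2) := i1.add I2
  have I123 : Integrable (fun ξ => ‖T a ξ‖ ^ 2 + ∑ j, ‖T (b j) ξ‖ ^ 2 + ∑ j, ‖T (c j) ξ‖ ^ 2) := I12.add I3
  rw [integral_add I123 I4, integral_add I12 I3, integral_add i1 I2,
    integral_finsetSum _ (fun j _ => i2 j), integral_finsetSum _ (fun j _ => i3 j), integral_finsetSum _ (fun i _ => I4' i)]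
  simp only [integral_finsetSum _ (fun j _ => i4 _ j)]

/-- compactly supported continuous, with an `L²` bound -/
structure B2 (M : ℝ) (f : E3 → ℝ) : Prop where
  cc : CC f
  le : ∫ x, f x ^ 2 ≤ M

lemma B2.add {M M' : ℝ} {f g : E3 → ℝ} (hf : B2 M f) (hg : B2 M' g) :
    B2 (2 * M + 2 * M') (fun x => f x + g x) := by
  have hc : CC (fun x => f x + g x) :=
    ⟨hf.cc.cont.add hg.cc.cont, HasCompactSupport.add hf.cc.supp hg.cc.supp⟩
  refine ⟨hc, ?_⟩
  have : ∫ x, (f x + g x) ^ 2 ≤ ∫ x, (2 * f x ^ 2 + 2 * g x ^ 2) := by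
    apply integral_mono hc.intSq ((hf.cc.intSq.const_mul 2).add (hg.cc.intSq.const_mul 2))
    intro x
    simp only [Pi.add_apply]
    nlinarith [sq_nonneg (f x - g x)]
  rw [integral_add (hf.cc.intSq.const_mul 2) (hg.cc.intSq.const_mul 2), integral_const_mul,
    integral_const_mul] at this
  linarith [hf.le, hg.le]

lemma B2.neg {M : ℝ} {f : E3 → ℝ} (hf : B2 M f) : B2 M (fun x => - f x) := by
  refine ⟨⟨hf.cc.cont.neg, hf.cc.supp.comp_left (g := fun t : ℝ => -t) (by simp)⟩, ?_⟩
  simpa using hf.le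

lemma B2.mono {M M' : ℝ} {f : E3 → ℝ} (hf : B2 M f) (h : M ≤ M') : B2 M' f := ⟨hf.cc, hf.le.trans h⟩

lemma B2.sum {M : ℝ} {f : Fin 3 → E3 → ℝ} (hf : ∀ i, B2 M (f i)) :
    B2 (10 * M) (fun x => ∑ i, f i x) := by
  simp only [Fin.sum_univ_three]
  exact (((hf 0).add (hf 1)).add (hf 2)).mono (by linarith)

/-- directional derivative -/
abbrev pd (i : Fin 3) (f : E3 → ℝ) : E3 → ℝ := fun x => fderiv ℝ f x (ee i)

structure Test (K : Set E3) (w : E3 → ℝ) : Prop where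
  cd : ContDiff ℝ ∞ w
  supp : HasCompactSupport w
  sub : tsupport w ⊆ K

lemma Test.pd {K : Set E3} {w : E3 → ℝ} (h : Test K w) (i : Fin 3) : Test K (pd i w) := by
  have hsub : tsupport (_root_.pd i w) ⊆ tsupport w := by
    refine closure_minimal ?_ (isClosed_tsupport w)
    intro x hx
    apply support_fderiv_subset ℝ
    intro h0
    apply hx
    simp [_root_.pd, h0]
  refine ⟨?_, ?_, hsub.trans h.sub⟩
  · exact (h.cd.fderiv_right (m := ∞) (by norm_cast)).clm_apply contDiff_const
  · exact HasCompactSupport.of_support_subset_isCompact h.supp ((subset_tsupport _).trans hsub)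

lemma Test.bdd {K : Set E3} {w : E3 → ℝ} (h : Test K w) : ∃ M, 0 ≤ M ∧ ∀ x, w x ^ 2 ≤ M := by
  obtain ⟨C, hC⟩ := h.supp.exists_bound_of_continuous h.cd.continuous
  refine ⟨C ^ 2, sq_nonneg _, fun x => ?_⟩
  rw [← sq_abs]
  exact pow_le_pow_left₀ (abs_nonneg _) (hC x) 2

lemma Test.b2 {K : Set E3} (hK : IsCompact K) {w f : E3 → ℝ} (h : Test K w) (hf : Continuous f) {M N : ℝ}
    (hM : ∀ x, w x ^ 2 ≤ M) (hM0 : 0 ≤ M) (hN : ∫ x in K, f x ^ 2 ≤ N) : B2 (M * N) (fun x => w x * f x) := by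
  have hc : CC (fun x => w x * f x) := ⟨h.cd.continuous.mul hf, h.supp.mul_right⟩
  refine ⟨hc, ?_⟩
  have h1 : ∫ x, (w x * f x) ^ 2 = ∫ x in K, (w x * f x) ^ 2 := by
    symm
    apply setIntegral_eq_integral_of_forall_compl_eq_zero
    intro x hx
    have : w x = 0 := by
      by_contra h0
      exact hx (h.sub (subset_tsupport _ h0))
    simp [this]
  rw [h1]
  have hi : IntegrableOn (fun x => f x ^ 2) K := (by fun_prop : Continuous fun x => f x ^ 2).continuousOn.integrableOn_compact hK
  calc ∫ x in K, (w x * f x) ^ 2 ≤ ∫ x in K, M * f x ^ 2 := by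
        apply integral_mono hc.intSq.integrableOn (hi.const_mul M)
        intro x
        simp only [mul_pow]
        exact mul_le_mul_of_nonneg_right (hM x) (sq_nonneg _)
    _ = M * ∫ x in K, f x ^ 2 := integral_const_mul _ _
    _ ≤ M * N := mul_le_mul_of_nonneg_left hN hM0

lemma Test.nice {K : Set E3} {w f : E3 → ℝ} (h : Test K w) (hf : ContDiff ℝ 1 f) :
    Nice (fun x => w x * f x) := ⟨(h.cd.of_le (by norm_cast)).mul hf, h.supp.mul_right⟩

lemma Test.pd_mul {K : Set E3} {w f : E3 → ℝ} (h : Test K w) (hf : ContDiff ℝ 1 f) (i : Fin 3) (x : E3) :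
    fderiv ℝ (fun x => w x * f x) x (ee i) = w x * fderiv ℝ f x (ee i) + fderiv ℝ w x (ee i) * f x := by
  have h1 : DifferentiableAt ℝ w x := (h.cd.differentiable (by norm_num)) x
  have h2 : DifferentiableAt ℝ f x := (hf.differentiable (by norm_num)) x
  rw [fderiv_fun_mul h1 h2]
  simp [mul_comm]

lemma localEst {K : Set E3} (hK : IsCompact K) {η : E3 → ℝ} (hη : Test K η) :
    ∃ C : ℝ, ∀ (r a : E3 → ℝ) (P : Fin 3 → E3 → ℝ) (q : Fin 3 → Fin 3 → E3 → ℝ) (N : ℝ), 0 ≤ N →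
      ContDiff ℝ 1 r → Continuous a → (∀ j, ContDiff ℝ 1 (P j)) → (∀ i j, ContDiff ℝ 1 (q i j)) →
      (∀ x ∈ K, r x = a x + ∑ j, fderiv ℝ (P j) x (ee j)) →
      (∀ x ∈ K, ∀ i, fderiv ℝ r x (ee i) = ∑ j, fderiv ℝ (q i j) x (ee j)) →
      (∫ x in K, a x ^ 2 ≤ N) → (∀ j, ∫ x in K, P j x ^ 2 ≤ N) → (∀ i j, ∫ x in K, q i j x ^ 2 ≤ N) →
      ∫ x, (η x * r x) ^ 2 ≤ C * N := by
  obtain ⟨M0, hM00, hM0⟩ := hη.bdd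
  choose M1 hM10 hM1 using fun i => (hη.pd i).bdd
  choose M2 hM20 hM2 using fun i j => ((hη.pd i).pd j).bdd
  set M := M0 + ∑ i, M1 i + ∑ i, ∑ j, M2 i j with hM
  have p1 : 0 ≤ ∑ i, M1 i := Finset.sum_nonneg fun i _ => hM10 i
  have p2 : 0 ≤ ∑ i, ∑ j, M2 i j := Finset.sum_nonneg fun i _ => Finset.sum_nonneg fun j _ => hM20 i j
  have hMnn : 0 ≤ M := by positivity
  have b0 : ∀ x, η x ^ 2 ≤ M := fun x => (hM0 x).trans (by linarith)
  have b1 : ∀ i x, pd i η x ^ 2 ≤ M := fun i x => (hM1 i x).trans (by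
    have := Finset.single_le_sum (fun i _ => hM10 i) (Finset.mem_univ i); linarith)
  have b2 : ∀ i j x, pd j (pd i η) x ^ 2 ≤ M := fun i j x => (hM2 i j x).trans (by
    have h1 := Finset.single_le_sum (fun j _ => hM20 i j) (Finset.mem_univ j)
    have h2 := Finset.single_le_sum (f := fun i => ∑ j, M2 i j) (fun i _ => Finset.sum_nonneg fun j _ => hM20 i j) (Finset.mem_univ i)
    linarith)
  refine ⟨36 * 1000 * M, ?_⟩
  intro r a P q N hN hr ha hP hq e1 e2 na nP nq
  -- zero off K
  have z0 : ∀ x, x ∉ K → η x = 0 := fun x hx => by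
    by_contra h0; exact hx (hη.sub (subset_tsupport _ h0))
  have z1 : ∀ i x, x ∉ K → pd i η x = 0 := fun i x hx => by
    by_contra h0; exact hx ((hη.pd i).sub (subset_tsupport _ h0))
  have z2 : ∀ i j x, x ∉ K → pd j (pd i η) x = 0 := fun i j x hx => by
    by_contra h0; exact hx (((hη.pd i).pd j).sub (subset_tsupport _ h0))
  have A : B2 (22 * (M * N)) (fun x => η x * a x + ∑ j, -(pd j η x * P j x)) :=
    ((hη.b2 hK ha b0 hMnn na).add (B2.sum fun j =>
      ((hη.pd j).b2 hK (hP j).continuous (b1 j) hMnn (nP j)).neg)).mono (by linarith)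
  have Bb : ∀ j, B2 (M * N) (fun x => η x * P j x) := fun j => hη.b2 hK (hP j).continuous b0 hMnn (nP j)
  have Cc : ∀ i, B2 (82 * (M * N)) (fun x => pd i η x * a x +
      ∑ j, -(pd j η x * q i j x + pd j (pd i η) x * P j x)) := fun i =>
    (((hη.pd i).b2 hK ha (b1 i) hMnn na).add (B2.sum fun j =>
      (((hη.pd j).b2 hK (hq i j).continuous (b1 j) hMnn (nq i j)).add
        (((hη.pd i).pd j).b2 hK (hP j).continuous (b2 i j) hMnn (nP j))).neg)).mono (by linarith)
  have Dd : ∀ i j, B2 (4 * (M * N)) (fun x => η x * q i j x + pd i η x * P j x) := fun i j =>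
    ((hη.b2 hK (hq i j).continuous b0 hMnn (nq i j)).add
      ((hη.pd i).b2 hK (hP j).continuous (b1 i) hMnn (nP j))).mono (by linarith)
  have nd : ∀ i j, Nice (fun x => η x * q i j x + pd i η x * P j x) := fun i j =>
    ⟨(hη.nice (hq i j)).cd.add ((hη.pd i).nice (hP j)).cd, (Dd i j).cc.supp⟩
  have key := fourierEst (hη.nice hr) A.cc (fun j => hη.nice (hP j)) (fun i => (Cc i).cc) nd ?_ ?_
  · have s1 : ∑ j, (∫ x, (η x * P j x) ^ 2) ≤ ∑ j : Fin 3, M * N := Finset.sum_le_sum fun j _ => (Bb j).le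
    have s2 := Finset.sum_le_sum (s := Finset.univ) fun i _ => (Cc i).le
    have s3 := Finset.sum_le_sum (s := Finset.univ) fun i _ => Finset.sum_le_sum (s := Finset.univ) fun j _ => (Dd i j).le
    have s0 := A.le
    simp only [Finset.sum_const, Finset.card_univ, Fintype.card_fin, nsmul_eq_mul] at s1 s2 s3
    have : 0 ≤ M * N := mul_nonneg hMnn hN
    push_cast at s1 s2 s3
    refine key.trans ?_
    nlinarith
  · intro x
    simp only [hη.pd_mul (hP _)]
    by_cases hx : x ∈ K
    · rw [e1 x hx]
      simp only [Fin.sum_univ_three, pd]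
      ring
    · have t1 := fun i => z1 i x hx
      simp only [pd] at t1
      simp [z0 x hx, t1]
  · intro x i
    have hd : ∀ j, fderiv ℝ (fun x => η x * q i j x + pd i η x * P j x) x (ee j) =
        (η x * fderiv ℝ (q i j) x (ee j) + fderiv ℝ η x (ee j) * q i j x) +
        (pd i η x * fderiv ℝ (P j) x (ee j) + fderiv ℝ (pd i η) x (ee j) * P j x) := by
      intro j
      rw [← hη.pd_mul (hq i j), ← (hη.pd i).pd_mul (hP j),
        fderiv_fun_add ((hη.nice (hq i j)).diff x) (((hη.pd i).nice (hP j)).diff x)]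
      rfl
    simp only [hd, hη.pd_mul hr]
    by_cases hx : x ∈ K
    · rw [e1 x hx, e2 x hx]
      simp only [Fin.sum_univ_three, pd]
      ring
    · have t1 := fun i => z1 i x hx
      have t2 := fun i j => z2 i j x hx
      simp only [pd] at t1 t2
      simp [z0 x hx, t1, t2]


lemma csq {Ω : Type*} [MeasurableSpace Ω] (ν : Measure Ω) [IsFiniteMeasure ν] (g : Ω → ℝ)
    (hg : AEStronglyMeasurable g ν) {W : ℝ} (hW : ∀ᵐ p ∂ν, |g p| ≤ W) :
    (∫ p, g p ∂ν) ^ 2 ≤ ν.real Set.univ * ∫ p, g p ^ 2 ∂ν := by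
  have i1 : Integrable g ν := Integrable.of_bound hg W hW
  have i2 : Integrable (fun p => g p ^ 2) ν := by
    refine Integrable.of_bound (f := fun p => g p ^ 2) (hg.pow 2) (W ^ 2) ?_
    filter_upwards [hW] with p hp
    rw [Real.norm_eq_abs, abs_pow]
    exact pow_le_pow_left₀ (abs_nonneg _) hp 2
  have h : ∀ t : ℝ, 0 ≤ ν.real Set.univ * (t * t) + (-2 * ∫ p, g p ∂ν) * t + ∫ p, g p ^ 2 ∂ν := by
    intro t
    have h0 : 0 ≤ ∫ p, (g p - t) ^ 2 ∂ν := integral_nonneg fun p => sq_nonneg _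
    have h1 : ∫ p, (g p - t) ^ 2 ∂ν = ∫ p, ((g p ^ 2 + (-2 * t) * g p) + t ^ 2) ∂ν := by
      congr 1; ext p; ring
    have i3 : Integrable (fun p => g p ^ 2 + (-2 * t) * g p) ν := i2.add (i1.const_mul _)
    rw [h1, integral_add i3 (integrable_const _), integral_add i2 (i1.const_mul _),
      integral_const_mul, integral_const] at h0
    simp only [smul_eq_mul] at h0
    linarith
  have := discrim_le_zero h
  rw [discrim] at this
  nlinarith

section Tr
variable {Ω : Type*} [MeasurableSpace Ω] (ν : Measure Ω) [IsFiniteMeasure ν] (w : Ω → ℝ) (τ : Ω → E3)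

def Tr (f : E3 → ℝ) (x : E3) : ℝ := ∫ p, w p * f (x - τ p) ∂ν

variable {ν w τ}

lemma Tr_bound {f : E3 → ℝ} (hf : CC f) : ∃ M, 0 ≤ M ∧ ∀ x, |f x| ≤ M := by
  obtain ⟨C, hC⟩ := hf.supp.exists_bound_of_continuous hf.cont
  exact ⟨C, (norm_nonneg _).trans (hC 0), hC⟩

lemma Nice.bound_fderiv {f : E3 → ℝ} (hf : Nice f) : ∃ M, 0 ≤ M ∧ ∀ x, ‖fderiv ℝ f x‖ ≤ M := by
  have hs : HasCompactSupport (fderiv ℝ f) := hf.supp.fderiv (𝕜 := ℝ)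
  obtain ⟨C, hC⟩ := hs.exists_bound_of_continuous (hf.cd.continuous_fderiv (by norm_num))
  exact ⟨C, (norm_nonneg _).trans (hC 0), hC⟩

lemma Tr_int (hw : Measurable w) (hτ : Measurable τ) {W : ℝ} (hW : ∀ p, |w p| ≤ W)
    {f : E3 → ℝ} (hf : CC f) (x : E3) : Integrable (fun p => w p * f (x - τ p)) ν := by
  obtain ⟨M, hM0, hM⟩ := Tr_bound hf
  apply Integrable.of_bound (C := W * M)
  · exact (hw.mul (hf.cont.measurable.comp (measurable_const.sub hτ))).aestronglyMeasurable
  · refine Filter.Eventually.of_forall fun p => ?_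
    rw [Real.norm_eq_abs, abs_mul]
    exact mul_le_mul (hW p) (hM _) (abs_nonneg _) ((abs_nonneg _).trans (hW p))

lemma Tr_fderiv (hw : Measurable w) (hτ : Measurable τ) {W : ℝ} (hW : ∀ p, |w p| ≤ W)
    {f : E3 → ℝ} (hf : Nice f) (x : E3) :
    HasFDerivAt (Tr ν w τ f) (∫ p, w p • fderiv ℝ f (x - τ p) ∂ν) x := by
  obtain ⟨M, hM0, hM⟩ := hf.bound_fderiv
  have hcf : Continuous (fderiv ℝ f) := hf.cd.continuous_fderiv (by norm_num)
  unfold Tr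
  apply hasFDerivAt_integral_of_dominated_of_fderiv_le (F := fun x p => w p * f (x - τ p))
    (F' := fun x p => w p • fderiv ℝ f (x - τ p)) (s := Set.univ) (bound := fun _ => W * M) Filter.univ_mem
  · refine Filter.Eventually.of_forall fun y => (Tr_int hw hτ hW hf.cc y).aestronglyMeasurable
  · exact Tr_int hw hτ hW hf.cc x
  · exact hw.aestronglyMeasurable.smul (hcf.measurable.comp (measurable_const.sub hτ)).aestronglyMeasurable
  · refine Filter.Eventually.of_forall fun p y _ => ?_
    rw [norm_smul]
    exact mul_le_mul (hW p) (hM _) (norm_nonneg _) ((abs_nonneg _).trans (hW p))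
  · exact integrable_const _
  · refine Filter.Eventually.of_forall fun p y _ => ?_
    have h1 : HasFDerivAt (fun y => f (y - τ p)) (fderiv ℝ f (y - τ p)) y := by
      rw [hasFDerivAt_comp_sub]
      exact (hf.diff (y - τ p)).hasFDerivAt
    exact h1.const_mul (w p)

lemma Tr_contDiff (hw : Measurable w) (hτ : Measurable τ) {W : ℝ} (hW : ∀ p, |w p| ≤ W)
    {f : E3 → ℝ} (hf : Nice f) : ContDiff ℝ 1 (Tr ν w τ f) := by
  obtain ⟨M, hM0, hM⟩ := hf.bound_fderiv
  have hcf : Continuous (fderiv ℝ f) := hf.cd.continuous_fderiv (by norm_num)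
  rw [contDiff_one_iff_hasFDerivAt]
  refine ⟨fun x => ∫ p, w p • fderiv ℝ f (x - τ p) ∂ν, ?_, Tr_fderiv hw hτ hW hf⟩
  apply continuous_of_dominated (bound := fun _ => W * M)
  · intro x
    exact hw.aestronglyMeasurable.smul (hcf.measurable.comp (measurable_const.sub hτ)).aestronglyMeasurable
  · intro x
    refine Filter.Eventually.of_forall fun p => ?_
    rw [norm_smul]
    exact mul_le_mul (hW p) (hM _) (norm_nonneg _) ((abs_nonneg _).trans (hW p))
  · exact integrable_const _
  · refine Filter.Eventually.of_forall fun p => ?_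
    fun_prop

lemma Tr_pd (hw : Measurable w) (hτ : Measurable τ) {W : ℝ} (hW : ∀ p, |w p| ≤ W)
    {f : E3 → ℝ} (hf : Nice f) (x : E3) (v : E3) :
    fderiv ℝ (Tr ν w τ f) x v = ∫ p, w p * fderiv ℝ f (x - τ p) v ∂ν := by
  obtain ⟨M, hM0, hM⟩ := hf.bound_fderiv
  have hcf : Continuous (fderiv ℝ f) := hf.cd.continuous_fderiv (by norm_num)
  rw [(Tr_fderiv hw hτ hW hf x).fderiv, ContinuousLinearMap.integral_apply]
  · rfl
  · apply Integrable.of_bound (C := W * M)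
    · exact hw.aestronglyMeasurable.smul (hcf.measurable.comp (measurable_const.sub hτ)).aestronglyMeasurable
    · refine Filter.Eventually.of_forall fun p => ?_
      rw [norm_smul]
      exact mul_le_mul (hW p) (hM _) (norm_nonneg _) ((abs_nonneg _).trans (hW p))

lemma Tr_sq (hw : Measurable w) (hτ : Measurable τ) {W : ℝ} (hW : ∀ p, |w p| ≤ W)
    {K : Set E3} (hK : IsCompact K)
    {f : E3 → ℝ} (hf : CC f) :
    ∫ x in K, Tr ν w τ f x ^ 2 ≤ (ν.real Set.univ * W) ^ 2 * ∫ x, f x ^ 2 := by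
  obtain ⟨M, hM0, hM⟩ := Tr_bound hf
  have hfin : IsFiniteMeasure (volume.restrict K) := ⟨by simpa using hK.measure_lt_top⟩
  have m1 : Measurable (fun q : E3 × Ω => f (q.1 - τ q.2) ^ 2) :=
    (hf.cont.measurable.comp (measurable_fst.sub (hτ.comp measurable_snd))).pow_const 2
  have ib : Integrable (fun q : E3 × Ω => f (q.1 - τ q.2) ^ 2) ((volume.restrict K).prod ν) := by
    apply Integrable.of_bound m1.aestronglyMeasurable (M ^ 2)
    refine Filter.Eventually.of_forall fun p => ?_
    rw [Real.norm_eq_abs, abs_pow]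
    exact pow_le_pow_left₀ (abs_nonneg _) (hM _) 2
  have p1 : ∀ x, Tr ν w τ f x ^ 2 ≤ (ν.real Set.univ * W ^ 2) * ∫ p, f (x - τ p) ^ 2 ∂ν := by
    intro x
    have h1 := csq ν (fun p => w p * f (x - τ p)) (Tr_int hw hτ hW hf x).aestronglyMeasurable (W := W * M)
      (Filter.Eventually.of_forall fun p => by
        rw [abs_mul]
        exact mul_le_mul (hW p) (hM _) (abs_nonneg _) ((abs_nonneg _).trans (hW p)))
    refine h1.trans ?_
    rw [mul_assoc]
    refine mul_le_mul_of_nonneg_left ?_ measureReal_nonneg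
    rw [← integral_const_mul]
    apply integral_mono_of_nonneg
    · exact Filter.Eventually.of_forall fun p => sq_nonneg _
    · apply Integrable.const_mul
      refine Integrable.of_bound (C := M ^ 2) ?_ ?_
      · exact (m1.comp (measurable_prodMk_left (x := x))).aestronglyMeasurable
      · refine Filter.Eventually.of_forall fun p => ?_
        rw [Real.norm_eq_abs, abs_pow]
        exact pow_le_pow_left₀ (abs_nonneg _) (hM _) 2
    · refine Filter.Eventually.of_forall fun p => ?_
      simp only [mul_pow]
      refine mul_le_mul_of_nonneg_right ?_ (sq_nonneg _)
      rw [← sq_abs]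
      exact pow_le_pow_left₀ (abs_nonneg _) (hW p) 2
  calc ∫ x in K, Tr ν w τ f x ^ 2 ≤ ∫ x in K, (ν.real Set.univ * W ^ 2) * ∫ p, f (x - τ p) ^ 2 ∂ν := by
        apply integral_mono_of_nonneg
        · exact Filter.Eventually.of_forall fun p => sq_nonneg _
        · exact ib.integral_prod_left.const_mul _
        · exact Filter.Eventually.of_forall p1
    _ = (ν.real Set.univ * W ^ 2) * ∫ x in K, ∫ p, f (x - τ p) ^ 2 ∂ν := integral_const_mul _ _
    _ = (ν.real Set.univ * W ^ 2) * ∫ p, (∫ x in K, f (x - τ p) ^ 2) ∂ν := by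
        rw [integral_integral_swap ib]
    _ ≤ (ν.real Set.univ * W ^ 2) * ∫ p, (∫ x, f x ^ 2) ∂ν := by
        refine mul_le_mul_of_nonneg_left ?_ (mul_nonneg measureReal_nonneg (sq_nonneg _))
        apply integral_mono ib.integral_prod_right (integrable_const _)
        intro p
        simp only
        have e : ∫ x, f x ^ 2 = ∫ x, f (x - τ p) ^ 2 := (integral_sub_right_eq_self (fun x => f x ^ 2) (τ p)).symm
        rw [e]
        apply setIntegral_le_integral
        · exact hf.intSq.comp_sub_right (τ p)
        · exact Filter.Eventually.of_forall fun x => sq_nonneg _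
    _ = _ := by
        rw [integral_const]; simp only [smul_eq_mul]; ring
end Tr


/-- clamped radius -/
def cl (r : ℝ) : ℝ := max (1/4) (min (1/2) r)

lemma cl_ge (r : ℝ) : 1/4 ≤ cl r := le_max_left _ _
lemma cl_le (r : ℝ) : cl r ≤ 1/2 := max_le (by norm_num) (min_le_left _ _)

lemma cl_lip (a b : ℝ) : |cl a - cl b| ≤ |a - b| := by
  unfold cl
  refine (abs_max_sub_max_le_max _ _ _ _).trans ?_
  simp only [sub_self, abs_zero]
  refine max_le (abs_nonneg _) ((abs_min_sub_min_le_max _ _ _ _).trans ?_)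
  simp

def MM (x : E3) : ℝ := 1 - 1 / (8 * cl ‖x‖ ^ 3)

lemma MM_lip : LipschitzWith 96 MM := by
  apply LipschitzWith.of_dist_le_mul
  intro x y
  rw [Real.dist_eq, dist_eq_norm]
  have ha := cl_ge ‖x‖
  have hb := cl_ge ‖y‖
  have hab := (cl_lip ‖x‖ ‖y‖).trans (abs_norm_sub_norm_le x y)
  unfold MM
  generalize cl ‖x‖ = a at *
  generalize cl ‖y‖ = b at *
  have ha0 : 0 < a := by linarith
  have hb0 : 0 < b := by linarith
  have e : (1 - 1 / (8 * a ^ 3)) - (1 - 1 / (8 * b ^ 3)) =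
      (a - b) * ((1/8) * (a⁻¹ * (b⁻¹)^3 + (a⁻¹)^2 * (b⁻¹)^2 + (a⁻¹)^3 * b⁻¹)) := by
    field_simp
    ring
  have hai : a⁻¹ ≤ 4 := by rw [inv_le_comm₀ ha0 (by norm_num)]; linarith
  have hbi : b⁻¹ ≤ 4 := by rw [inv_le_comm₀ hb0 (by norm_num)]; linarith
  have hai0 : 0 ≤ a⁻¹ := by positivity
  have hbi0 : 0 ≤ b⁻¹ := by positivity
  have k1 : a⁻¹ * (b⁻¹)^3 ≤ 4 * 4 ^ 3 := by gcongr
  have k2 : (a⁻¹)^2 * (b⁻¹)^2 ≤ 4 ^ 2 * 4 ^ 2 := by gcongr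
  have k3 : (a⁻¹)^3 * b⁻¹ ≤ 4 ^ 3 * 4 := by gcongr
  rw [e, abs_mul, mul_comm]
  have k4 : |(1/8) * (a⁻¹ * (b⁻¹)^3 + (a⁻¹)^2 * (b⁻¹)^2 + (a⁻¹)^3 * b⁻¹)| ≤ 96 := by
    rw [abs_of_nonneg (by positivity)]
    linarith
  exact mul_le_mul k4 hab (abs_nonneg _) (by norm_num)

lemma MM_bound (x : E3) : |MM x| ≤ 7 := by
  unfold MM
  have ha := cl_ge ‖x‖
  have hb := cl_le ‖x‖
  generalize cl ‖x‖ = a at *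
  have ha0 : 0 < a := by linarith
  have h1 : (1/4 : ℝ) ^ 3 ≤ a ^ 3 := by gcongr
  have h2 : a ^ 3 ≤ (1/2 : ℝ) ^ 3 := by gcongr
  have h3 : 1 / (8 * a ^ 3) ≤ 8 := by
    rw [div_le_iff₀ (by positivity)]; linarith
  have h4 : 1 ≤ 1 / (8 * a ^ 3) := by
    rw [le_div_iff₀ (by positivity)]; linarith
  rw [abs_le]; constructor <;> linarith

lemma MM_in {x : E3} (hx : ‖x‖ ≤ 1/4) : MM x = -7 := by
  have : cl ‖x‖ = 1/4 := by
    unfold cl; rw [min_eq_right (by linarith), max_eq_left hx]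
  unfold MM; rw [this]; norm_num

lemma MM_mid {x : E3} (hx : 1/4 ≤ ‖x‖) (hx' : ‖x‖ ≤ 1/2) : MM x = 1 - 1 / (8 * ‖x‖ ^ 3) := by
  have : cl ‖x‖ = ‖x‖ := by
    unfold cl; rw [min_eq_right (by linarith), max_eq_right hx]
  unfold MM; rw [this]

lemma MM_out {x : E3} (hx : 1/2 ≤ ‖x‖) : MM x = 0 := by
  have : cl ‖x‖ = 1/2 := by
    unfold cl; rw [min_eq_left (by linarith)]; norm_num
  unfold MM; rw [this]; norm_num

lemma DM_in {x : E3} (hx : ‖x‖ < 1/4) (v : E3) : lineDeriv ℝ MM x v = 0 := by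
  have : MM =ᶠ[nhds x] fun _ => -7 := by
    filter_upwards [(isOpen_lt continuous_norm continuous_const).mem_nhds hx] with y hy
    exact MM_in (le_of_lt hy)
  rw [this.lineDeriv_eq]
  simp [lineDeriv]

lemma DM_out {x : E3} (hx : 1/2 < ‖x‖) (v : E3) : lineDeriv ℝ MM x v = 0 := by
  have : MM =ᶠ[nhds x] fun _ => 0 := by
    filter_upwards [(isOpen_lt continuous_const continuous_norm).mem_nhds hx] with y hy
    exact MM_out (le_of_lt hy)
  rw [this.lineDeriv_eq]
  simp [lineDeriv]

lemma DM_mid {x : E3} (hx : 1/4 < ‖x‖) (hx' : ‖x‖ < 1/2) (v : E3) :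
    lineDeriv ℝ MM x v = 3 / (8 * ‖x‖ ^ 5) * inner ℝ x v := by
  have : MM =ᶠ[nhds x] fun y => 1 - 1 / (8 * ‖y‖ ^ 3) := by
    filter_upwards [(isOpen_lt continuous_const continuous_norm).mem_nhds hx,
      (isOpen_lt continuous_norm continuous_const).mem_nhds hx'] with y hy hy'
    exact MM_mid (le_of_lt hy) (le_of_lt hy')
  rw [this.lineDeriv_eq]
  have hx0 : 0 < ‖x‖ := by linarith
  have h1 : HasDerivAt (fun t : ℝ => ‖x + t • v‖ ^ 2) (2 * inner ℝ x v) 0 := by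
    have h := ((hasDerivAt_id (0:ℝ)).smul_const v).const_add x |>.norm_sq
    simpa using h
  have h2 : HasDerivAt (fun t : ℝ => ‖x + t • v‖) (inner ℝ x v / ‖x‖) 0 := by
    have h := h1.sqrt (by simpa using hx0.ne')
    simp only [zero_smul, add_zero, Real.sqrt_sq (norm_nonneg _)] at h
    convert h using 1
    field_simp
  have h3 : HasDerivAt (fun t : ℝ => 1 - 1 / (8 * ‖x + t • v‖ ^ 3)) (3 / (8 * ‖x‖ ^ 5) * inner ℝ x v) 0 := by
    have h2' : HasDerivAt (fun t : ℝ => 8 * ‖x + t • v‖ ^ 3) (8 * (3 * ‖x‖ ^ 2 * (inner ℝ x v / ‖x‖))) 0 := by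
      have h := (h2.pow 3).const_mul 8
      simp only [zero_smul, add_zero] at h
      exact h
    have h : HasDerivAt (fun t : ℝ => 1 - (8 * ‖x + t • v‖ ^ 3)⁻¹) _ 0 :=
      (h2'.fun_inv (by simpa using hx0.ne')).const_sub 1
    simp only [one_div]
    refine h.congr_deriv ?_
    simp only [zero_smul, add_zero]
    field_simp
  exact h3.deriv

lemma sph_null (r : ℝ) (hr : r ≠ 0) : ∀ᵐ x : E3, ‖x‖ ≠ r := by
  have h := Measure.addHaar_sphere_of_ne_zero (volume : Measure E3) 0 hr
  rw [measure_eq_zero_iff_ae_notMem] at h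
  filter_upwards [h] with x hx h0
  exact hx (by simpa using h0)

lemma MM_ibp {g : E3 → ℝ} (hg : Nice g) (v : E3) :
    ∫ x, lineDeriv ℝ MM x v * g x = - ∫ x, MM x * fderiv ℝ g x v := by
  obtain ⟨D, hD⟩ := hg.cd.lipschitzWith_of_hasCompactSupport hg.supp (by norm_num)
  rw [MM_lip.integral_lineDeriv_mul_eq hD hg.supp v, ← integral_neg]
  congr 1; ext x
  rw [(hg.diff x).lineDeriv_eq_fderiv, map_neg]; ring

lemma DM_bound (x v : E3) : |lineDeriv ℝ MM x v| ≤ 96 * ‖v‖ := by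
  simpa using norm_lineDeriv_le_of_lipschitz ℝ MM_lip (x₀ := x) (v := v)

lemma DM_meas (v : E3) : Measurable (fun x => lineDeriv ℝ MM x v) :=
  measurable_lineDeriv MM_lip.continuous

lemma DM_intg {g : E3 → ℝ} (hg : CC g) (v : E3) : Integrable (fun x => lineDeriv ℝ MM x v * g x) :=
  hg.int.bdd_mul (DM_meas v).aestronglyMeasurable (Filter.Eventually.of_forall fun x => DM_bound x v)

lemma MM_intg {g : E3 → ℝ} (hg : CC g) : Integrable (fun x => MM x * g x) :=
  hg.int.bdd_mul MM_lip.continuous.aestronglyMeasurable (Filter.Eventually.of_forall fun x => MM_bound x)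

lemma coord_fderiv (i : Fin 3) (x v : E3) : fderiv ℝ (fun y : E3 => y i) x v = v i := by
  have : (fun y : E3 => y i) = (EuclideanSpace.proj i : E3 →L[ℝ] ℝ) := rfl
  rw [this, ContinuousLinearMap.fderiv]; rfl

lemma coord_cd (i : Fin 3) : ContDiff ℝ 1 (fun y : E3 => y i) := by fun_prop

lemma coord_nice {s : E3 → ℝ} (hs : Nice s) (i : Fin 3) : Nice (fun x => x i * s x) :=
  ⟨(coord_cd i).mul hs.cd, hs.supp.mul_left⟩

lemma coord_pd {s : E3 → ℝ} (hs : Nice s) (i j : Fin 3) (x : E3) :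
    fderiv ℝ (fun x : E3 => x i * s x) x (ee j) = x i * fderiv ℝ s x (ee j) + (if i = j then 1 else 0) * s x := by
  rw [fderiv_fun_mul ((coord_cd i).differentiable (by norm_num) x) (hs.diff x)]
  simp only [add_apply, smul_apply, coord_fderiv, smul_eq_mul]
  congr 1
  simp [ee, mul_comm]

lemma Nice.pdcc {f : E3 → ℝ} (h : Nice f) (i : Fin 3) : CC (fun x => fderiv ℝ f x (ee i)) := by
  refine ⟨?_, ?_⟩
  · exact (h.cd.continuous_fderiv (by norm_num)).clm_apply continuous_const
  · exact (h.supp.fderiv (𝕜 := ℝ)).comp_left (g := fun L : E3 →L[ℝ] ℝ => L (ee i)) (by simp)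

lemma CC.coord {f : E3 → ℝ} (h : CC f) (i : Fin 3) : CC (fun x => x i * f x) :=
  ⟨(coord_cd i).continuous.mul h.cont, h.supp.mul_left⟩

/-- the radial identity -/
lemma mean_id {s : E3 → ℝ} (hs : Nice s) :
    3 * (∫ x in ball (0 : E3) (1/2), s x) - 24 * (∫ x in ball (0 : E3) (1/4), s x) =
      - ∑ i, ∫ x, MM x * (x i * fderiv ℝ s x (ee i)) := by
  have h1 : ∀ i, ∫ x, (lineDeriv ℝ MM x (ee i) * (x i * s x) + MM x * s x) =
      - ∫ x, MM x * (x i * fderiv ℝ s x (ee i)) := by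
    intro i
    rw [integral_add (DM_intg (coord_nice hs i).cc _) (MM_intg hs.cc), MM_ibp (coord_nice hs i)]
    simp_rw [coord_pd hs i i]
    simp only [if_true, one_mul, mul_add]
    rw [integral_add (MM_intg ((hs.pdcc i).coord i)) (MM_intg hs.cc)]
    ring
  have hI : ∀ i, Integrable (fun x => lineDeriv ℝ MM x (ee i) * (x i * s x) + MM x * s x) :=
    fun i => (DM_intg (coord_nice hs i).cc _).add (MM_intg hs.cc)
  rw [← Finset.sum_neg_distrib, ← Finset.sum_congr rfl (fun i _ => h1 i),
    ← integral_finsetSum _ (fun i _ => hI i),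
    ← integral_indicator measurableSet_ball, ← integral_indicator measurableSet_ball,
    ← integral_const_mul, ← integral_const_mul, ← integral_sub]
  · apply integral_congr_ae
    filter_upwards [sph_null (1/2) (by norm_num), sph_null (1/4) (by norm_num)] with x k1 k2
    simp only [Set.indicator, mem_ball_zero_iff]
    rcases lt_trichotomy ‖x‖ (1/4) with h | h | h
    · rw [if_pos (by linarith), if_pos h]
      simp only [DM_in h, MM_in h.le, Fin.sum_univ_three]; ring
    · exact absurd h k2
    · rcases lt_trichotomy ‖x‖ (1/2) with h' | h' | h'
      · rw [if_pos h', if_neg (by linarith)]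
        simp only [DM_mid h h', MM_mid h.le h'.le]
        have hn : ‖x‖ ^ 2 = x 0 * x 0 + x 1 * x 1 + x 2 * x 2 := by
          rw [EuclideanSpace.norm_sq_eq, Fin.sum_univ_three]; simp [sq]
        have hi : ∀ i, inner ℝ x (ee i) = x i := by
          intro i; simp [ee, EuclideanSpace.inner_single_right]
        simp only [hi, Fin.sum_univ_three]
        have hx0 : 0 < ‖x‖ := by linarith
        have : 3 / (8 * ‖x‖ ^ 5) * (x 0 * x 0 + x 1 * x 1 + x 2 * x 2) = 3 / (8 * ‖x‖^3) := by
          rw [← hn]; field_simp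
        have e2 : 3 / (8 * ‖x‖^3) = 3 * (1 / (8 * ‖x‖^3)) := by ring
        linear_combination (-s x) * this + (-s x) * e2
      · exact absurd h' k1
      · rw [if_neg (by linarith), if_neg (by linarith)]
        simp only [DM_out h', MM_out h'.le, Fin.sum_univ_three]; ring
  · exact (hs.cc.int.indicator measurableSet_ball).const_mul _
  · exact (hs.cc.int.indicator measurableSet_ball).const_mul _

lemma mean_z {z : E3 → ℝ} (hz : Nice z) (i j : Fin 3) :
    (∫ x, MM x * (x i * fderiv ℝ z x (ee j))) ^ 2 ≤
      (volume.real (ball (0:E3) (1/2)) * 103 ^ 2) * ∫ x in ball (0:E3) (1/2), z x ^ 2 := by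
  set F : E3 → ℝ := fun x => lineDeriv ℝ MM x (ee j) * x i + MM x * (if i = j then 1 else 0) with hF
  have e1 : ∫ x, MM x * (x i * fderiv ℝ z x (ee j)) = - ∫ x, F x * z x := by
    have := MM_ibp (coord_nice hz i) (ee j)
    simp_rw [coord_pd hz i j, mul_add] at this
    have k : CC (fun x => (if i = j then (1:ℝ) else 0) * z x) :=
      ⟨continuous_const.mul hz.cc.cont, hz.supp.mul_left⟩
    rw [integral_add (MM_intg ((hz.pdcc j).coord i)) (MM_intg k)] at this
    have e : ∫ x, F x * z x = (∫ x, lineDeriv ℝ MM x (ee j) * (x i * z x)) + ∫ x, MM x * ((if i = j then 1 else 0) * z x) := by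
      rw [← integral_add (DM_intg (coord_nice hz i).cc _) (MM_intg k)]
      congr 1; ext x; simp only [hF]; ring
    rw [e, this]; ring
  have e2 : ∫ x, F x * z x = ∫ x in ball (0:E3) (1/2), F x * z x := by
    rw [← integral_indicator measurableSet_ball]
    apply integral_congr_ae
    filter_upwards [sph_null (1/2) (by norm_num)] with x k1
    simp only [Set.indicator, mem_ball_zero_iff]
    split_ifs with h
    · rfl
    · have h' : 1/2 < ‖x‖ := lt_of_le_of_ne (not_lt.1 h) (Ne.symm k1)
      simp [hF, DM_out h', MM_out h'.le]
  have bF : ∀ x ∈ ball (0:E3) (1/2), |F x| ≤ 103 := by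
    intro x hx
    rw [mem_ball_zero_iff] at hx
    have b1 := DM_bound x (ee j)
    have b2 : ‖ee j‖ = 1 := by simp [ee]
    have b3 : |x i| ≤ ‖x‖ := PiLp.norm_apply_le x i
    have b4 := MM_bound x
    have b5 : |(if i = j then (1:ℝ) else 0)| ≤ 1 := by split_ifs <;> simp
    rw [b2, mul_one] at b1
    calc |F x| ≤ |lineDeriv ℝ MM x (ee j)| * |x i| + |MM x| * |(if i = j then (1:ℝ) else 0)| := by
          simp only [hF]; refine (abs_add_le _ _).trans ?_; rw [abs_mul, abs_mul]
      _ ≤ 96 * 1 + 7 * 1 := by gcongr; linarith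
      _ = 103 := by norm_num
  have mF : Measurable F := by
    have := DM_meas (ee j)
    have h2 := MM_lip.continuous.measurable
    have h3 := (coord_cd i).continuous.measurable
    exact (this.mul h3).add (h2.mul measurable_const)
  obtain ⟨B, hB0, hB⟩ := Tr_bound hz.cc
  have fin : IsFiniteMeasure (volume.restrict (ball (0:E3) (1/2))) := ⟨by
    rw [Measure.restrict_apply_univ]; exact measure_ball_lt_top⟩
  have c := csq (volume.restrict (ball (0:E3) (1/2))) (fun x => F x * z x)
    (mF.mul hz.cc.cont.measurable).aestronglyMeasurable (W := 103 * B) (by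
      filter_upwards [ae_restrict_mem measurableSet_ball] with x hx
      rw [abs_mul]
      exact mul_le_mul (bF x hx) (hB x) (abs_nonneg _) (by norm_num))
  rw [e1, neg_sq, e2]
  refine c.trans ?_
  rw [mul_assoc]
  simp only [measureReal_restrict_apply_univ]
  refine mul_le_mul_of_nonneg_left ?_ measureReal_nonneg
  rw [← integral_const_mul]
  apply integral_mono_of_nonneg
  · exact Filter.Eventually.of_forall fun x => sq_nonneg _
  · exact (hz.cc.intSq.integrableOn).const_mul _
  · filter_upwards [ae_restrict_mem measurableSet_ball] with x hx
    simp only [mul_pow]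
    refine mul_le_mul_of_nonneg_right ?_ (sq_nonneg _)
    rw [← sq_abs]
    exact pow_le_pow_left₀ (abs_nonneg _) (bF x hx) 2

lemma mean_est : ∃ C : ℝ, 0 ≤ C ∧ ∀ (s : E3 → ℝ) (z : Fin 3 → Fin 3 → E3 → ℝ), Nice s → (∀ i j, Nice (z i j)) →
    (∀ x ∈ ball (0 : E3) (1/2), ∀ i, fderiv ℝ s x (ee i) = -6 * ∑ j, fderiv ℝ (z i j) x (ee j)) →
    ((∫ x in ball (0 : E3) (1/2), s x) - 8 * (∫ x in ball (0 : E3) (1/4), s x)) ^ 2 ≤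
      C * ∑ i, ∑ j, ∫ x in ball (0:E3) (1/2), z i j x ^ 2 := by
  refine ⟨36 * (volume.real (ball (0:E3) (1/2)) * 103 ^ 2), by positivity, fun s z hs hz hrel => ?_⟩
  set V := volume.real (ball (0:E3) (1/2)) * 103 ^ 2
  have h1 := mean_id hs
  set a : Fin 3 → Fin 3 → ℝ := fun i j => ∫ x, MM x * (x i * fderiv ℝ (z i j) x (ee j)) with ha
  have h2 : ∀ i, ∫ x, MM x * (x i * fderiv ℝ s x (ee i)) = -6 * ∑ j, a i j := by
    intro i
    rw [ha]
    simp only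
    rw [← integral_finsetSum _ (fun j _ => MM_intg (((hz i j).pdcc j).coord i)), ← integral_const_mul]
    congr 1; ext x
    by_cases hx : x ∈ ball (0:E3) (1/2)
    · rw [hrel x hx i]; simp only [Fin.sum_univ_three]; ring
    · rw [mem_ball_zero_iff, not_lt] at hx
      simp [MM_out hx]
  rw [Finset.sum_congr rfl (fun i _ => h2 i), ← Finset.mul_sum] at h1
  have h3 : (∫ x in ball (0 : E3) (1/2), s x) - 8 * (∫ x in ball (0 : E3) (1/4), s x) = 2 * ∑ i, ∑ j, a i j := by linarith
  rw [h3]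
  have k : ∀ i j, a i j ^ 2 ≤ V * ∫ x in ball (0:E3) (1/2), z i j x ^ 2 := fun i j => mean_z (hz i j) i j
  have h4 : (∑ i, ∑ j, a i j) ^ 2 ≤ 9 * ∑ i, ∑ j, a i j ^ 2 := by
    have e1 := sq_sum_le_card_mul_sum_sq (s := (Finset.univ : Finset (Fin 3 × Fin 3))) (f := fun p => a p.1 p.2)
    rw [Fintype.sum_prod_type, Fintype.sum_prod_type] at e1
    simpa using e1
  have h5 : ∑ i, ∑ j, a i j ^ 2 ≤ V * ∑ i, ∑ j, ∫ x in ball (0:E3) (1/2), z i j x ^ 2 := by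
    simp only [Finset.mul_sum]
    exact Finset.sum_le_sum fun i _ => Finset.sum_le_sum fun j _ => k i j
  nlinarith

def bmp : ContDiffBump (0 : E3) := ⟨1/64, 1/32, by norm_num, by norm_num⟩

def ph : E3 → ℝ := bmp.normed volume

lemma ph_cd : ContDiff ℝ 1 ph := bmp.contDiff_normed (n := 1)
lemma ph_nice : Nice ph := ⟨ph_cd, bmp.hasCompactSupport_normed⟩
lemma ph_int : ∫ x, ph x = 1 := bmp.integral_normed
lemma ph_zero {y : E3} (hy : y ∉ closedBall (0:E3) (1/32)) : ph y = 0 := by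
  by_contra h
  have : y ∈ Function.support ph := h
  rw [ph, bmp.support_normed_eq] at this
  exact hy (ball_subset_closedBall this)
lemma dph_zero {y : E3} (hy : y ∉ closedBall (0:E3) (1/32)) (i : Fin 3) : fderiv ℝ ph y (ee i) = 0 := by
  by_contra h
  have h1 : y ∈ Function.support (fderiv ℝ ph) := fun h0 => h (by rw [h0]; rfl)
  have h2 := support_fderiv_subset ℝ h1
  rw [ph, bmp.tsupport_normed_eq] at h2
  exact hy h2

/-- volume on the small ball -/
def Dn : Measure E3 := volume.restrict (closedBall (0:E3) (1/32))
def In : Measure ℝ := volume.restrict (Set.Ioc (0:ℝ) 1)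
instance : IsFiniteMeasure Dn := ⟨by rw [Dn, Measure.restrict_apply_univ]; exact measure_closedBall_lt_top⟩
instance : IsFiniteMeasure In := ⟨by rw [In, Measure.restrict_apply_univ]; simp⟩

lemma Dn_ph (f : E3 → ℝ) : ∫ y, ph y * f y ∂Dn = ∫ y, ph y * f y := by
  apply setIntegral_eq_integral_of_forall_compl_eq_zero
  intro y hy; rw [ph_zero hy, zero_mul]

lemma Dn_dph (f : E3 → ℝ) (i : Fin 3) : ∫ y, fderiv ℝ ph y (ee i) * f y ∂Dn = ∫ y, fderiv ℝ ph y (ee i) * f y := by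
  apply setIntegral_eq_integral_of_forall_compl_eq_zero
  intro y hy; rw [dph_zero hy, zero_mul]

def ww (i : Fin 3) (p : E3 × ℝ) : ℝ := ph p.1 * p.1 i
def tt (p : E3 × ℝ) : E3 := p.2 • p.1

lemma ww_meas (i : Fin 3) : Measurable (ww i) := by
  have h : Continuous (ww i) := by
    unfold ww
    have := ph_cd.continuous
    fun_prop
  exact h.measurable
lemma tt_meas : Measurable tt := by
  have h : Continuous tt := by unfold tt; fun_prop
  exact h.measurable
lemma ww_bdd : ∃ W, 0 ≤ W ∧ ∀ i p, |ww i p| ≤ W := by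
  choose W hW0 hW using fun i => Tr_bound (ph_nice.cc.coord i)
  refine ⟨∑ i, W i, Finset.sum_nonneg fun i _ => hW0 i, fun i p => ?_⟩
  have h1 := hW i p.1
  rw [mul_comm] at h1
  exact h1.trans (Finset.single_le_sum (fun i _ => hW0 i) (Finset.mem_univ i))

lemma lin_sum (L : E3 →L[ℝ] ℝ) (y : E3) : L y = ∑ i, y i * L (ee i) := by
  have h : y = ∑ i, y i • ee i := by
    ext j
    simp [ee, Finset.sum_apply, Pi.single_apply]
  conv_lhs => rw [h]
  simp

lemma ftc {s : E3 → ℝ} (hs : Nice s) (x y : E3) :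
    s x - s (x - y) = ∫ t, fderiv ℝ s (x - t • y) y ∂In := by
  have hd : ∀ t ∈ Set.uIcc (0:ℝ) 1, HasDerivAt (fun t : ℝ => - s (x - t • y)) (fderiv ℝ s (x - t • y) y) t := by
    intro t _
    have h1 : HasDerivAt (fun t : ℝ => x - t • y) (-y) t := by
      have := ((hasDerivAt_id t).smul_const y).const_sub x
      simpa using this
    have h2 : HasDerivAt (fun t : ℝ => - s (x - t • y)) (-(fderiv ℝ s (x - t • y) (-y))) t :=
      ((hs.diff (x - t • y)).hasFDerivAt.comp_hasDerivAt t h1).neg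
    exact h2.congr_deriv (by rw [map_neg, neg_neg])
  have hc : Continuous (fun t : ℝ => fderiv ℝ s (x - t • y) y) := by
    have := hs.cd.continuous_fderiv (by norm_num)
    fun_prop
  have := intervalIntegral.integral_eq_sub_of_hasDerivAt hd (hc.intervalIntegrable 0 1)
  rw [intervalIntegral.integral_of_le zero_le_one] at this
  rw [In, this]; simp; ring

lemma repr_ph {s : E3 → ℝ} (hs : Nice s) (x : E3) :
    s x - Tr Dn ph id s x = ∑ i, ∫ p, ww i p * fderiv ℝ s (x - tt p) (ee i) ∂(Dn.prod In) := by
  obtain ⟨W, hW0, hW⟩ := ww_bdd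
  have I : ∀ i, Integrable (fun p => ww i p * fderiv ℝ s (x - tt p) (ee i)) (Dn.prod In) :=
    fun i => Tr_int (ww_meas i) tt_meas (hW i) (hs.pdcc i) x
  obtain ⟨B, hB0, hB⟩ := Tr_bound ph_nice.cc
  have J : Integrable (fun y => ph y * s (x - id y)) Dn := Tr_int ph_cd.continuous.measurable measurable_id hB hs.cc x
  have J2 : Integrable (fun y => ph y * s x) Dn := (ph_nice.cc.int.restrict).mul_const _
  rw [← integral_finsetSum _ (fun i _ => I i), integral_prod _ (integrable_finsetSum _ fun i _ => I i)]
  have e1 : s x = ∫ y, ph y * s x ∂Dn := by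
    rw [Dn_ph, integral_mul_const, ph_int, one_mul]
  conv_lhs => rw [e1]
  unfold Tr
  rw [← integral_sub J2 J]
  congr 1; ext y
  rw [← mul_sub, id, ftc hs, ← integral_const_mul]
  congr 1; ext t
  rw [lin_sum _ y, Finset.mul_sum]
  simp only [ww, tt, mul_assoc]

lemma ibp_ph {z : E3 → ℝ} (hz : Nice z) (x : E3) (j : Fin 3) :
    ∫ y, ph y * fderiv ℝ z (x - y) (ee j) ∂Dn = Tr Dn (fun y => fderiv ℝ ph y (ee j)) id z x := by
  unfold Tr
  simp only [id]
  rw [Dn_ph, Dn_dph]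
  have hg : Nice (fun y => z (x - y)) := by
    refine ⟨hz.cd.comp (contDiff_const.sub contDiff_id), ?_⟩
    exact hz.supp.comp_homeomorph (Homeomorph.subLeft x)
  have hd : ∀ y, fderiv ℝ (fun y => z (x - y)) y (ee j) = - fderiv ℝ z (x - y) (ee j) := by
    intro y
    have h1 : HasFDerivAt (fun y : E3 => x - y) (-(ContinuousLinearMap.id ℝ E3)) y :=
      (hasFDerivAt_id y).const_sub x
    have h2 : HasFDerivAt (fun y => z (x - y)) ((fderiv ℝ z (x - y)).comp (-(ContinuousLinearMap.id ℝ E3))) y :=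
      (hz.diff (x - y)).hasFDerivAt.comp y h1
    rw [h2.fderiv]; simp
  have c1 : ∀ {f g : E3 → ℝ}, CC f → CC g → Integrable (fun x => f x * g x) := fun hf hg =>
    CC.int ⟨hf.cont.mul hg.cont, hf.supp.mul_right⟩
  have := integral_mul_fderiv_eq_neg_fderiv_mul_of_integrable (μ := (volume : Measure E3)) (f := ph)
    (g := fun y => z (x - y)) (v := ee j) (c1 (ph_nice.pdcc j) hg.cc) (c1 ph_nice.cc (hg.pdcc j))
    (c1 ph_nice.cc hg.cc) (fun y _ => ph_nice.diff y) (fun y _ => hg.diff y)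
  simp only [hd, mul_neg, integral_neg, neg_inj] at this
  exact this

lemma Tr_pt {w : E3 → ℝ} (hw : Measurable w) {W : ℝ} (hW : ∀ p, |w p| ≤ W) {f : E3 → ℝ} (hf : CC f) (x : E3) :
    Tr Dn w id f x ^ 2 ≤ (Dn.real Set.univ * W ^ 2) * ∫ y, f y ^ 2 := by
  obtain ⟨M, hM0, hM⟩ := Tr_bound hf
  have h1 := csq Dn (fun p => w p * f (x - p)) (Tr_int hw measurable_id hW hf x).aestronglyMeasurable (W := W * M)
      (Filter.Eventually.of_forall fun p => by
        rw [abs_mul]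
        exact mul_le_mul (hW p) (hM _) (abs_nonneg _) ((abs_nonneg _).trans (hW p)))
  refine h1.trans ?_
  rw [mul_assoc]
  refine mul_le_mul_of_nonneg_left ?_ measureReal_nonneg
  have i2 : Integrable (fun y => f (x - y) ^ 2) := hf.intSq.comp_sub_left x
  calc ∫ p, (w p * f (x - p)) ^ 2 ∂Dn ≤ ∫ p, W ^ 2 * f (x - p) ^ 2 ∂Dn := by
        apply integral_mono_of_nonneg
        · exact Filter.Eventually.of_forall fun p => sq_nonneg _
        · exact (i2.restrict).const_mul _
        · refine Filter.Eventually.of_forall fun p => ?_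
          simp only [mul_pow]
          refine mul_le_mul_of_nonneg_right ?_ (sq_nonneg _)
          rw [← sq_abs]
          exact pow_le_pow_left₀ (abs_nonneg _) (hW p) 2
    _ = W ^ 2 * ∫ p, f (x - p) ^ 2 ∂Dn := integral_const_mul _ _
    _ ≤ W ^ 2 * ∫ p, f (x - p) ^ 2 := by
        refine mul_le_mul_of_nonneg_left ?_ (sq_nonneg _)
        exact setIntegral_le_integral i2 (Filter.Eventually.of_forall fun p => sq_nonneg _)
    _ = _ := by rw [integral_sub_left_eq_self (fun y => f y ^ 2) volume x]

lemma CC.sq_nn {f : E3 → ℝ} : 0 ≤ ∫ x, f x ^ 2 := integral_nonneg fun x => sq_nonneg _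

/-- pointwise oscillation bound for the mollification -/
lemma osc : ∃ C : ℝ, 0 ≤ C ∧ ∀ (s : E3 → ℝ) (z : Fin 3 → Fin 3 → E3 → ℝ), Nice s → (∀ i j, Nice (z i j)) →
    (∀ x ∈ ball (0 : E3) (7/16), ∀ i, fderiv ℝ s x (ee i) = -6 * ∑ j, fderiv ℝ (z i j) x (ee j)) →
    ∀ x ∈ closedBall (0:E3) (3/8), (Tr Dn ph id s x - Tr Dn ph id s 0) ^ 2 ≤ C * ∑ i, ∑ j, ∫ x, z i j x ^ 2 := by
  choose W hW0 hW using fun i => Tr_bound (ph_nice.pdcc i)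
  obtain ⟨B, hB0, hB⟩ := Tr_bound ph_nice.cc
  set V := ∑ i, W i with hV
  have hV0 : 0 ≤ V := Finset.sum_nonneg fun i _ => hW0 i
  have hWV : ∀ i x, |fderiv ℝ ph x (ee i)| ≤ V := fun i x =>
    (hW i x).trans (Finset.single_le_sum (fun i _ => hW0 i) (Finset.mem_univ i))
  set A := Dn.real Set.univ * V ^ 2 with hA
  have hA0 : 0 ≤ A := mul_nonneg measureReal_nonneg (sq_nonneg _)
  refine ⟨54 ^ 2 * A, by positivity, fun s z hs hz hrel x hx => ?_⟩
  set N := ∑ i, ∑ j, ∫ x, z i j x ^ 2 with hN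
  have hNij : ∀ i j, ∫ x, z i j x ^ 2 ≤ N := by
    intro i j
    have h1 := Finset.single_le_sum (f := fun j => ∫ x, z i j x ^ 2) (fun j _ => CC.sq_nn) (Finset.mem_univ j)
    have h2 := Finset.single_le_sum (f := fun i => ∑ j, ∫ x, z i j x ^ 2)
      (fun i _ => Finset.sum_nonneg fun j _ => CC.sq_nn) (Finset.mem_univ i)
    exact h1.trans h2
  have hN0 : 0 ≤ N := CC.sq_nn.trans (hNij 0 0)
  have hz1 : ∀ i j y, |Tr Dn (fun y => fderiv ℝ ph y (ee j)) id (z i j) y| ≤ Real.sqrt (A * N) := by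
    intro i j y
    apply Real.abs_le_sqrt
    refine (Tr_pt (ph_nice.pdcc j).cont.measurable (hWV j) (hz i j).cc y).trans ?_
    exact mul_le_mul_of_nonneg_left (hNij i j) hA0
  have hS : ContDiff ℝ 1 (Tr Dn ph id s) := Tr_contDiff ph_cd.continuous.measurable measurable_id hB hs
  have d1 : ∀ y ∈ closedBall (0:E3) (3/8), ∀ i, |fderiv ℝ (Tr Dn ph id s) y (ee i)| ≤ 18 * Real.sqrt (A * N) := by
    intro y hy i
    have e : fderiv ℝ (Tr Dn ph id s) y (ee i) =
        -6 * ∑ j, Tr Dn (fun y => fderiv ℝ ph y (ee j)) id (z i j) y := by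
      rw [Tr_pd ph_cd.continuous.measurable measurable_id hB hs]
      simp_rw [← ibp_ph (hz i _) y]
      rw [← integral_finsetSum, ← integral_const_mul]
      · apply setIntegral_congr_fun measurableSet_closedBall
        intro p hp
        simp only [id]
        rw [hrel (y - p) ?_ i]
        · simp only [Fin.sum_univ_three]; ring
        · rw [mem_closedBall_zero_iff] at hp hy
          rw [mem_ball_zero_iff]
          have := norm_sub_le y p
          linarith
      · intro j _
        exact Tr_int ph_cd.continuous.measurable measurable_id hB ((hz i j).pdcc j) y
    rw [e, Fin.sum_univ_three, abs_mul]
    have a0 := hz1 i 0 y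
    have a1 := hz1 i 1 y
    have a2 := hz1 i 2 y
    have t := abs_add_three (Tr Dn (fun y => fderiv ℝ ph y (ee 0)) id (z i 0) y)
      (Tr Dn (fun y => fderiv ℝ ph y (ee 1)) id (z i 1) y) (Tr Dn (fun y => fderiv ℝ ph y (ee 2)) id (z i 2) y)
    rw [show |(-6:ℝ)| = 6 by norm_num]
    linarith
  have d2 : ∀ y ∈ closedBall (0:E3) (3/8), ‖fderiv ℝ (Tr Dn ph id s) y‖ ≤ 54 * Real.sqrt (A * N) := by
    intro y hy
    apply ContinuousLinearMap.opNorm_le_bound _ (by positivity)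
    intro v
    rw [lin_sum, Real.norm_eq_abs]
    refine (Finset.abs_sum_le_sum_abs _ _).trans ?_
    have : ∀ i ∈ Finset.univ, |v i * fderiv ℝ (Tr Dn ph id s) y (ee i)| ≤ ‖v‖ * (18 * Real.sqrt (A * N)) := by
      intro i _
      rw [abs_mul]
      exact mul_le_mul (PiLp.norm_apply_le v i) (d1 y hy i) (abs_nonneg _) (norm_nonneg _)
    refine (Finset.sum_le_sum this).trans ?_
    simp; linarith
  have m := (convex_closedBall (0:E3) (3/8)).norm_image_sub_le_of_norm_fderiv_le (𝕜 := ℝ)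
    (f := Tr Dn ph id s) (fun y _ => hS.differentiable (by norm_num) y) d2
    (mem_closedBall_self (by norm_num)) hx
  have hx' : ‖x - 0‖ ≤ 1 := by
    rw [mem_closedBall_zero_iff] at hx; rw [sub_zero]; linarith
  have m2 : |Tr Dn ph id s x - Tr Dn ph id s 0| ≤ 54 * Real.sqrt (A * N) := by
    refine m.trans ?_
    have : 0 ≤ 54 * Real.sqrt (A * N) := by positivity
    nlinarith
  rw [← sq_abs]
  refine (pow_le_pow_left₀ (abs_nonneg _) m2 2).trans (le_of_eq ?_)
  rw [mul_pow, Real.sq_sqrt (by positivity)]; ring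

def etab : ContDiffBump (0 : E3) := ⟨1/4, 3/8, by norm_num, by norm_num⟩

lemma core : ∃ C : ℝ, ∀ (s : E3 → ℝ) (z : Fin 3 → Fin 3 → E3 → ℝ), Nice s → (∀ i j, Nice (z i j)) →
    (∀ x ∈ ball (0 : E3) (7/16), ∀ i, fderiv ℝ s x (ee i) = -6 * ∑ j, fderiv ℝ (z i j) x (ee j)) →
    ∃ c : ℝ, ∫ x in ball (0:E3) (1/4), (s x - c) ^ 2 ≤ C * ∑ i, ∑ j, ∫ x, z i j x ^ 2 := by
  set K : Set E3 := closedBall (0:E3) (3/8) with hKdef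
  have hK : IsCompact K := isCompact_closedBall _ _
  have hη : Test K (etab : E3 → ℝ) := ⟨etab.contDiff, etab.hasCompactSupport, by rw [etab.tsupport_eq]; rfl⟩
  obtain ⟨C1, hC1⟩ := localEst hK hη
  obtain ⟨C2, hC20, hC2⟩ := osc
  obtain ⟨W, hW0, hW⟩ := ww_bdd
  obtain ⟨B, hB0, hB⟩ := Tr_bound ph_nice.cc
  set Q := ((Dn.prod In).real Set.univ * W) ^ 2 with hQ
  have hQ0 : 0 ≤ Q := sq_nonneg _
  set L := volume.real K * C2 + 36 * 9 * Q + 36 with hL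
  have hL0 : 0 ≤ L := by positivity
  refine ⟨C1 * L, fun s z hs hz hrel => ⟨Tr Dn ph id s 0, ?_⟩⟩
  set N := ∑ i, ∑ j, ∫ x, z i j x ^ 2 with hN
  have hNij : ∀ i j, ∫ x, z i j x ^ 2 ≤ N := by
    intro i j
    have h1 := Finset.single_le_sum (f := fun j => ∫ x, z i j x ^ 2) (fun j _ => CC.sq_nn) (Finset.mem_univ j)
    have h2 := Finset.single_le_sum (f := fun i => ∑ j, ∫ x, z i j x ^ 2)
      (fun i _ => Finset.sum_nonneg fun j _ => CC.sq_nn) (Finset.mem_univ i)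
    exact h1.trans h2
  have hN0 : 0 ≤ N := CC.sq_nn.trans (hNij 0 0)
  have hS : ContDiff ℝ 1 (Tr Dn ph id s) := Tr_contDiff ph_cd.continuous.measurable measurable_id hB hs
  set c := Tr Dn ph id s 0 with hc
  have hTr : ∀ i j, ContDiff ℝ 1 (Tr (Dn.prod In) (ww i) tt (z i j)) := fun i j =>
    Tr_contDiff (ww_meas i) tt_meas (hW i) (hz i j)
  have hP : ∀ j, ContDiff ℝ 1 (fun x => -6 * ∑ i, Tr (Dn.prod In) (ww i) tt (z i j) x) := fun j =>
    contDiff_const.mul (ContDiff.sum fun i _ => hTr i j)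
  have hKsub : K ⊆ ball (0:E3) (7/16) := closedBall_subset_ball (by norm_num)
  have hfin : IsFiniteMeasure (volume.restrict K) := ⟨by
    rw [Measure.restrict_apply_univ]; exact hK.measure_lt_top⟩
  have key := hC1 (fun x => s x - c) (fun x => Tr Dn ph id s x - c)
    (fun j x => -6 * ∑ i, Tr (Dn.prod In) (ww i) tt (z i j) x) (fun i j x => -6 * z i j x) (L * N)
    (by positivity) (hs.cd.sub contDiff_const) (hS.continuous.sub continuous_const) hP
    (fun i j => contDiff_const.mul (hz i j).cd) ?_ ?_ ?_ ?_ ?_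
  · rw [mul_assoc]
    refine le_trans ?_ key
    have hc : CC (fun x => etab x * (s x - c)) :=
      ⟨etab.continuous.mul (hs.cc.cont.sub continuous_const), etab.hasCompactSupport.mul_right⟩
    refine le_trans (le_of_eq ?_) (setIntegral_le_integral (s := ball (0:E3) (1/4)) hc.intSq
      (Filter.Eventually.of_forall fun x => sq_nonneg _))
    apply setIntegral_congr_fun measurableSet_ball
    intro x hx
    simp only
    rw [etab.one_of_mem_closedBall (ball_subset_closedBall hx), one_mul]
  · intro x hx
    have e := repr_ph hs x
    have e2 : ∀ i, ∫ p, ww i p * fderiv ℝ s (x - tt p) (ee i) ∂(Dn.prod In) =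
        -6 * ∑ j, fderiv ℝ (Tr (Dn.prod In) (ww i) tt (z i j)) x (ee j) := by
      intro i
      simp_rw [Tr_pd (ww_meas i) tt_meas (hW i) (hz i _)]
      rw [← integral_finsetSum, ← integral_const_mul]
      · have hpr : Dn.prod In = (volume.prod volume).restrict (closedBall (0:E3) (1/32) ×ˢ Set.Ioc (0:ℝ) 1) := by
          rw [Dn, In, Measure.prod_restrict]
        rw [hpr]
        apply setIntegral_congr_fun (measurableSet_closedBall.prod measurableSet_Ioc)
        intro p hp
        simp only
        rw [hrel (x - tt p) ?_ i]
        · simp only [Fin.sum_univ_three]; ring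
        · obtain ⟨h1, h2⟩ := hp
          rw [mem_closedBall_zero_iff] at h1
          have hx' : ‖x‖ ≤ 3/8 := by simpa [hKdef] using hx
          rw [mem_ball_zero_iff]
          have := norm_sub_le x (tt p)
          have h3 : ‖tt p‖ ≤ 1 * (1/32) := by
            rw [tt, norm_smul]
            refine mul_le_mul ?_ h1 (norm_nonneg _) (by norm_num)
            rw [Real.norm_eq_abs, abs_of_pos h2.1]; exact h2.2
          linarith
      · intro j _
        exact Tr_int (ww_meas i) tt_meas (hW i) ((hz i j).pdcc j) x
    have e3 : ∀ j, fderiv ℝ (fun x => -6 * ∑ i, Tr (Dn.prod In) (ww i) tt (z i j) x) x (ee j) =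
        -6 * ∑ i, fderiv ℝ (Tr (Dn.prod In) (ww i) tt (z i j)) x (ee j) := by
      intro j
      have hd : ∀ i, DifferentiableAt ℝ (Tr (Dn.prod In) (ww i) tt (z i j)) x := fun i =>
        (hTr i j).differentiable (by norm_num) x
      have h := (HasFDerivAt.fun_sum (u := Finset.univ) (fun i _ => (hd i).hasFDerivAt)).const_mul (-6)
      rw [h.fderiv]
      simp [Fin.sum_univ_three]
      ring
    simp_rw [e2] at e
    simp_rw [e3]
    simp only [Fin.sum_univ_three] at e ⊢
    linarith
  · intro x hx i
    rw [fderiv_sub_const, hrel x (hKsub hx) i, Finset.mul_sum]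
    refine Finset.sum_congr rfl fun j _ => ?_
    rw [fderiv_const_mul ((hz i j).diff x)]; simp
  · have : ∀ x ∈ K, (Tr Dn ph id s x - c) ^ 2 ≤ C2 * N := hC2 s z hs hz hrel
    calc ∫ x in K, (Tr Dn ph id s x - c) ^ 2 ≤ ∫ x in K, C2 * N := by
          apply setIntegral_mono_on _ (integrable_const _) hK.measurableSet this
          exact ((hS.continuous.sub continuous_const).pow 2).continuousOn.integrableOn_compact hK
      _ = (volume.real K * C2) * N := by
          rw [integral_const]; simp only [measureReal_restrict_apply_univ, smul_eq_mul]; ring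
      _ ≤ L * N := by
          refine mul_le_mul_of_nonneg_right ?_ hN0
          have : 0 ≤ 36 * 9 * Q + 36 := by positivity
          linarith
  · intro j
    have hI : ∀ i, IntegrableOn (fun x => Tr (Dn.prod In) (ww i) tt (z i j) x ^ 2) K := fun i =>
      ((hTr i j).continuous.pow 2).continuousOn.integrableOn_compact hK
    have hi : ∀ i, ∫ x in K, Tr (Dn.prod In) (ww i) tt (z i j) x ^ 2 ≤ Q * N := fun i =>
      (Tr_sq (ww_meas i) tt_meas (hW i) hK (hz i j).cc).trans (mul_le_mul_of_nonneg_left (hNij i j) hQ0)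
    calc ∫ x in K, (-6 * ∑ i, Tr (Dn.prod In) (ww i) tt (z i j) x) ^ 2
        ≤ ∫ x in K, 108 * ∑ i, Tr (Dn.prod In) (ww i) tt (z i j) x ^ 2 := by
          apply integral_mono
          · exact ((hP j).continuous.pow 2).continuousOn.integrableOn_compact hK
          · exact (integrable_finsetSum _ fun i _ => hI i).const_mul 108
          · intro x
            have := sq_sum_le_card_mul_sum_sq (s := (Finset.univ : Finset (Fin 3)))
              (f := fun i => Tr (Dn.prod In) (ww i) tt (z i j) x)
            simp at this
            simp only
            rw [mul_pow]; linarith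
      _ = 108 * ∑ i, ∫ x in K, Tr (Dn.prod In) (ww i) tt (z i j) x ^ 2 := by
          rw [integral_const_mul, integral_finsetSum _ fun i _ => hI i]
      _ ≤ 108 * ∑ i : Fin 3, Q * N := by
          refine mul_le_mul_of_nonneg_left (Finset.sum_le_sum fun i _ => hi i) (by norm_num)
      _ = (36 * 9 * Q) * N := by simp; ring
      _ ≤ L * N := by
          refine mul_le_mul_of_nonneg_right ?_ hN0
          have : 0 ≤ volume.real K * C2 + 36 := by positivity
          linarith
  · intro i j
    calc ∫ x in K, (-6 * z i j x) ^ 2 = 36 * ∫ x in K, z i j x ^ 2 := by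
          rw [← integral_const_mul]; congr 1; ext x; ring
      _ ≤ 36 * N := by
          refine mul_le_mul_of_nonneg_left (le_trans ?_ (hNij i j)) (by norm_num)
          exact setIntegral_le_integral (hz i j).cc.intSq (Filter.Eventually.of_forall fun x => sq_nonneg _)
      _ ≤ L * N := by
          refine mul_le_mul_of_nonneg_right ?_ hN0
          have : 0 ≤ volume.real K * C2 + 36 * 9 * Q := by positivity
          linarith

lemma cut_nice (b : ContDiffBump (0:E3)) (hb : b.rOut < 1) {s : E3 → ℝ} (hs : ContDiffOn ℝ 1 s (ball 0 1)) :
    Nice (fun x => b x * s x) := by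
  refine ⟨?_, b.hasCompactSupport.mul_right⟩
  rw [contDiff_iff_contDiffAt]
  intro x
  by_cases hx : x ∈ ball (0:E3) 1
  · exact b.contDiffAt.mul (hs.contDiffAt (isOpen_ball.mem_nhds hx))
  · have h1 : x ∉ tsupport b := by
      rw [b.tsupport_eq]
      intro h
      exact hx (closedBall_subset_ball hb h)
    have h2 : (fun x => b x * s x) =ᶠ[nhds x] fun _ => 0 := by
      filter_upwards [notMem_tsupport_iff_eventuallyEq.1 h1] with y hy
      rw [hy]; simp
    exact contDiffAt_const.congr_of_eventuallyEq h2

lemma cut_fderiv (b : ContDiffBump (0:E3)) (s : E3 → ℝ) {x : E3} (hx : x ∈ ball (0:E3) b.rIn) :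
    fderiv ℝ (fun x => b x * s x) x = fderiv ℝ s x := by
  apply Filter.EventuallyEq.fderiv_eq
  filter_upwards [isOpen_ball.mem_nhds hx] with y hy
  rw [b.one_of_mem_closedBall (ball_subset_closedBall hy), one_mul]

def cutA : ContDiffBump (0 : E3) := ⟨5/8, 3/4, by norm_num, by norm_num⟩
def cutB : ContDiffBump (0 : E3) := ⟨7/16, 15/32, by norm_num, by norm_num⟩

lemma cutA_one {x : E3} (hx : x ∈ ball (0:E3) (1/2)) : cutA x = 1 :=
  cutA.one_of_mem_closedBall (by
    rw [mem_ball_zero_iff] at hx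
    rw [mem_closedBall_zero_iff]
    show ‖x‖ ≤ 5/8
    linarith)

lemma cutB_one {x : E3} (hx : x ∈ ball (0:E3) (1/4)) : cutB x = 1 :=
  cutB.one_of_mem_closedBall (by
    rw [mem_ball_zero_iff] at hx
    rw [mem_closedBall_zero_iff]
    show ‖x‖ ≤ 7/16
    linarith)

lemma vol8 : volume.real (ball (0:E3) (1/2)) = 8 * volume.real (ball (0:E3) (1/4)) := by
  have h := Measure.addHaar_ball_mul (volume : Measure E3) 0 (r := 2) (by norm_num) (1/4)
  rw [show (2:ℝ) * (1/4) = 1/2 by norm_num] at h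
  rw [measureReal_def, measureReal_def, h, ENNReal.toReal_mul]
  simp
  norm_num

lemma cutB_sq {z : E3 → ℝ} (hz : ContDiffOn ℝ 1 z (ball 0 1)) :
    ∫ x, (cutB x * z x) ^ 2 ≤ ∫ x in ball (0:E3) (1/2), z x ^ 2 := by
  have hN := cut_nice cutB (by show (15/32:ℝ) < 1; norm_num) hz
  have hsub : closedBall (0:E3) (1/2) ⊆ ball 0 1 := closedBall_subset_ball (by norm_num)
  have hi : IntegrableOn (fun x => z x ^ 2) (ball (0:E3) (1/2)) :=
    (((hz.continuousOn.mono hsub).pow 2).integrableOn_compact (isCompact_closedBall _ _)).mono_set ball_subset_closedBall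
  rw [← setIntegral_eq_integral_of_forall_compl_eq_zero (s := ball (0:E3) (1/2))]
  · apply integral_mono hN.cc.intSq.restrict hi
    intro x
    simp only [mul_pow]
    have h0 := cutB.nonneg (x := x)
    have h1 := cutB.le_one (x := x)
    have : cutB x ^ 2 ≤ 1 := by nlinarith
    nlinarith [sq_nonneg (z x)]
  · intro x hx
    rw [cutB.zero_of_le_dist]
    · simp
    · rw [mem_ball, not_lt] at hx
      show (15/32:ℝ) ≤ _
      linarith

lemma final_est {I1 I2 V c C C' N J : ℝ} (hV : 0 < V) (hJ : J ≤ C * N)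
    (h1 : (I1 - c * V) ^ 2 ≤ V * J) (h2 : (I2 - 8 * I1) ^ 2 ≤ C' * N) :
    2 * J + 2 * (V * (c - (8 * V)⁻¹ * I2) ^ 2) ≤ (6 * C + C' / (16 * V)) * N := by
  have e : c - (8 * V)⁻¹ * I2 = -((I2 - 8 * I1) / (8 * V) + (I1 - c * V) / V) := by
    field_simp; ring
  have k : (c - (8 * V)⁻¹ * I2) ^ 2 ≤ 2 * ((I2 - 8 * I1) / (8 * V)) ^ 2 + 2 * ((I1 - c * V) / V) ^ 2 := by
    rw [e]; nlinarith [sq_nonneg ((I2 - 8 * I1) / (8 * V) - (I1 - c * V) / V)]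
  have k1 : V * ((I2 - 8 * I1) / (8 * V)) ^ 2 ≤ C' * N / (64 * V) := by
    have : V * ((I2 - 8 * I1) / (8 * V)) ^ 2 = (I2 - 8 * I1) ^ 2 / (64 * V) := by field_simp; ring
    rw [this]; gcongr
  have k2 : V * ((I1 - c * V) / V) ^ 2 ≤ J := by
    have : V * ((I1 - c * V) / V) ^ 2 = (I1 - c * V) ^ 2 / V := by field_simp
    rw [this, div_le_iff₀ hV]; linarith
  have k3 := mul_le_mul_of_nonneg_left k hV.le
  have k4 : C' / (16 * V) * N = 4 * (C' * N / (64 * V)) := by field_simp; ring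
  rw [add_mul, k4]
  nlinarith

end

/-- Poincaré-type estimate from the contracted Bianchi identity: there is an
absolute constant `C` such that for any `C¹` symmetric matrix field `z` and `C¹`
function `s` on the unit ball `B ⊂ ℝ³` satisfying `∂ᵢ s = −6·∑ⱼ ∂ⱼ z_{ij}`,
one has `∫_{B(0,1/4)} (s − s̄)² ≤ C·∫_{B(0,1/2)} |z|²`, where `s̄` is the mean of
`s` over `B(0,1/2)` and `|z|²` is the squared Frobenius norm. -/
theorem bianchi_scalar_mean_oscillation :
    ∃ C : ℝ,
      ∀ (z : Fin 3 → Fin 3 → EuclideanSpace ℝ (Fin 3) → ℝ)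
        (s : EuclideanSpace ℝ (Fin 3) → ℝ),
      (∀ i j : Fin 3, ContDiffOn ℝ 1 (z i j) (ball 0 1)) →
      ContDiffOn ℝ 1 s (ball 0 1) →
      (∀ i j : Fin 3, ∀ x ∈ ball (0 : EuclideanSpace ℝ (Fin 3)) 1,
        z i j x = z j i x) →
      (∀ x ∈ ball (0 : EuclideanSpace ℝ (Fin 3)) 1, ∀ i : Fin 3,
        fderiv ℝ s x (EuclideanSpace.single i (1 : ℝ)) =
          -6 * ∑ j : Fin 3, fderiv ℝ (z i j) x (EuclideanSpace.single j (1 : ℝ))) →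
      (∫ x in ball (0 : EuclideanSpace ℝ (Fin 3)) (1 / 4),
          (s x - ⨍ y in ball (0 : EuclideanSpace ℝ (Fin 3)) (1 / 2), s y) ^ 2) ≤
        C * ∫ x in ball (0 : EuclideanSpace ℝ (Fin 3)) (1 / 2),
          ∑ i : Fin 3, ∑ j : Fin 3, (z i j x) ^ 2 := by
  obtain ⟨C0, hcore⟩ := core
  obtain ⟨C', hC', hmean⟩ := mean_est
  set V := volume.real (ball (0:E3) (1/4)) with hVd
  have hV : 0 < V := ENNReal.toReal_pos (measure_ball_pos _ _ (by norm_num)).ne' measure_ball_lt_top.ne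
  refine ⟨6 * |C0| + C' / (16 * V), fun z s hz hs _ hrel => ?_⟩
  have hsub : closedBall (0:E3) (1/2) ⊆ ball 0 1 := closedBall_subset_ball (by norm_num)
  have hi : ∀ i j, IntegrableOn (fun x => z i j x ^ 2) (ball (0:E3) (1/2)) := fun i j =>
    ((((hz i j).continuousOn.mono hsub).pow 2).integrableOn_compact (isCompact_closedBall _ _)).mono_set ball_subset_closedBall
  have hNe : ∫ x in ball (0 : E3) (1 / 2), ∑ i : Fin 3, ∑ j : Fin 3, (z i j x) ^ 2 =
      ∑ i, ∑ j, ∫ x in ball (0 : E3) (1 / 2), (z i j x) ^ 2 := by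
    rw [integral_finsetSum _ fun i _ => integrable_finsetSum _ fun j _ => hi i j]
    exact Finset.sum_congr rfl fun i _ => integral_finsetSum _ fun j _ => hi i j
  rw [hNe]
  set N := ∑ i, ∑ j, ∫ x in ball (0 : E3) (1 / 2), (z i j x) ^ 2 with hN
  have hA1 : cutA.rOut < 1 := by show (3/4:ℝ) < 1; norm_num
  have hB1 : cutB.rOut < 1 := by show (15/32:ℝ) < 1; norm_num
  -- mean estimate
  have hm := hmean (fun x => cutA x * s x) (fun i j x => cutA x * z i j x) (cut_nice cutA hA1 hs)
    (fun i j => cut_nice cutA hA1 (hz i j)) (by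
      intro x hx i
      have hx' : x ∈ ball (0:E3) cutA.rIn := ball_subset_ball (by show (1/2:ℝ) ≤ 5/8; norm_num) hx
      simp_rw [cut_fderiv cutA _ hx']
      exact hrel x (hsub (ball_subset_closedBall hx)) i)
  have r1 : ∫ x in ball (0:E3) (1/2), cutA x * s x = ∫ x in ball (0:E3) (1/2), s x :=
    setIntegral_congr_fun measurableSet_ball fun x hx => by beta_reduce; rw [cutA_one hx, one_mul]
  have r2 : ∫ x in ball (0:E3) (1/4), cutA x * s x = ∫ x in ball (0:E3) (1/4), s x :=
    setIntegral_congr_fun measurableSet_ball fun x hx => by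
      beta_reduce; rw [cutA_one (ball_subset_ball (by norm_num) hx), one_mul]
  have r3 : ∀ i j, ∫ x in ball (0:E3) (1/2), (cutA x * z i j x) ^ 2 = ∫ x in ball (0:E3) (1/2), z i j x ^ 2 :=
    fun i j => setIntegral_congr_fun measurableSet_ball fun x hx => by beta_reduce; rw [cutA_one hx, one_mul]
  simp_rw [r1, r2, r3] at hm
  -- core estimate
  obtain ⟨c, hc⟩ := hcore (fun x => cutB x * s x) (fun i j x => cutB x * z i j x) (cut_nice cutB hB1 hs)
    (fun i j => cut_nice cutB hB1 (hz i j)) (by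
      intro x hx i
      have hx' : x ∈ ball (0:E3) cutB.rIn := hx
      simp_rw [cut_fderiv cutB _ hx']
      exact hrel x (ball_subset_ball (by norm_num) hx) i)
  have r4 : ∫ x in ball (0:E3) (1/4), (cutB x * s x - c) ^ 2 = ∫ x in ball (0:E3) (1/4), (s x - c) ^ 2 :=
    setIntegral_congr_fun measurableSet_ball fun x hx => by beta_reduce; rw [cutB_one hx, one_mul]
  rw [r4] at hc
  have hJ : ∫ x in ball (0:E3) (1/4), (s x - c) ^ 2 ≤ |C0| * N := by
    refine hc.trans ?_
    have p1 : 0 ≤ ∑ i, ∑ j, ∫ x, (cutB x * z i j x) ^ 2 :=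
      Finset.sum_nonneg fun i _ => Finset.sum_nonneg fun j _ => CC.sq_nn
    have p2 : ∑ i, ∑ j, ∫ x, (cutB x * z i j x) ^ 2 ≤ N :=
      Finset.sum_le_sum fun i _ => Finset.sum_le_sum fun j _ => cutB_sq (hz i j)
    exact (mul_le_mul_of_nonneg_right (le_abs_self C0) p1).trans (mul_le_mul_of_nonneg_left p2 (abs_nonneg _))
  have hfin : IsFiniteMeasure (volume.restrict (ball (0:E3) (1/4))) := ⟨by
    rw [Measure.restrict_apply_univ]; exact measure_ball_lt_top⟩
  have hsub4 : closedBall (0:E3) (1/4) ⊆ ball 0 1 := closedBall_subset_ball (by norm_num)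
  have hsc : ContinuousOn s (closedBall (0:E3) (1/4)) := hs.continuousOn.mono hsub4
  have is : IntegrableOn s (ball (0:E3) (1/4)) :=
    (hsc.integrableOn_compact (isCompact_closedBall _ _)).mono_set ball_subset_closedBall
  have isq : ∀ d : ℝ, IntegrableOn (fun x => (s x - d) ^ 2) (ball (0:E3) (1/4)) := fun d =>
    (((hsc.sub continuousOn_const).pow 2).integrableOn_compact (isCompact_closedBall _ _)).mono_set ball_subset_closedBall
  obtain ⟨W, hW⟩ := (isCompact_closedBall (0:E3) (1/4)).exists_bound_of_continuousOn (hsc.sub (continuousOn_const (c := c)))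
  have h1 := csq (volume.restrict (ball (0:E3) (1/4))) (fun x => s x - c)
    (is.sub (integrable_const c)).aestronglyMeasurable (W := W) (by
      filter_upwards [ae_restrict_mem measurableSet_ball] with x hx
      exact hW x (ball_subset_closedBall hx))
  rw [integral_sub is (integrable_const c), integral_const, measureReal_restrict_apply_univ, smul_eq_mul,
    mul_comm _ c] at h1
  have hfe := final_est hV hJ h1 hm
  rw [setAverage_eq, vol8, smul_eq_mul]
  refine le_trans ?_ hfe
  set m := (8 * V)⁻¹ * ∫ x in ball (0:E3) (1/2), s x with hmdef
  calc ∫ x in ball (0:E3) (1/4), (s x - m) ^ 2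
      ≤ ∫ x in ball (0:E3) (1/4), (2 * (s x - c) ^ 2 + 2 * (c - m) ^ 2) := by
        apply integral_mono (isq m) (((isq c).const_mul 2).add (integrable_const _))
        intro x
        simp only [Pi.add_apply]
        nlinarith [sq_nonneg ((s x - c) - (c - m))]
    _ = _ := by
        rw [integral_add ((isq c).const_mul 2) (integrable_const _), integral_const_mul, integral_const,
          measureReal_restrict_apply_univ, smul_eq_mul]
        ring
end
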